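/- arXiv:1712.03676 — 2 statements merged into one kernel-verified Lean document; each statement's English description precedes it below -/
import Mathlib

section
/- Let Λ be a nonempty finite set, and for each x ∈ Λ let μ_x be a probability measure on ℝ supported in [−1, 1]. For h ∈ ℝ let μ_x^h be the probability measure with density proportional to e^{hσ} with respect to μ_x, and assume there is γ > 0 such that for every x ∈ Λ, every h ∈ ℝ, and every smooth f : ℝ → ℝ, Ent_{μ_x^h}(f²) ≤ (2/γ) ∫ (f')² dμ_x^h. Let M be a symmetric positive definite real Λ×Λ matrix with largest eigenvalue ‖M‖ < 1, and let ν be the probability measure on ℝ^Λ with density proportional to exp(−(1/2) Σ_{x,y∈Λ} M_{xy} σ_x σ_y) with respect to ⊗_{x∈Λ} μ_x. Then for every smooth F : ℝ^Λ → ℝ, Ent_ν(F²) ≤ (2/γ)(1 + 2‖M‖/(1 − ‖M‖)) Σ_{x∈Λ} ∫ (∂_{σ_x} F)² dν. -/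
/-!
Write `r` for the bound on the coupling matrix `M` and pick `c` slightly larger than `r` such that
`exp (c / 2) / (1 - c) ≤ (1 + r) / (1 - r) = 1 + 2 r / (1 - r)`; there is room because
`exp (r / 2) < 1 + r` (`exists_shift`). Then
`-σ·Mσ / 2 = -c |σ|² / 2 + σ·Aσ / 2` with `A = c - M` positive definite and `A ≤ c`. The weight
`exp (-c a² / 2)` is put into new single-site measures `β x`. Its exponent oscillates by at most
`c / 2` on `[-1, 1]`, so the tilts of `β x` keep a uniform logarithmic Sobolev inequality up to the
factor `exp (c / 2)` (`ent_sq_tilted_sq_le`).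

The interaction `σ·Aσ / 2` is linearized by a Gaussian integral: `ν` is the mixture, over a random
external field `h` with density proportional to `Z(h) exp (-h·A⁻¹h / 2)`, of the product measures
`P_h = fieldMeasure β h` (`integral_integral_fieldMeasure`). The covariance of a product measure on
the cube is at most the identity and `A⁻¹ ≥ 1 / c`, so the law `ϱ` of `h` is uniformly log-concave
with constant `1 / c - 1` (`fieldLogDensity_combo`).

With `G h = ∫ g dP_h`, the entropy splits as `Ent_ν g = ∫ Ent_{P_h} g dϱ + Ent_ϱ G`. The second
term is bounded by the logarithmic Sobolev inequality for `ϱ`, derived from the Prékopa–Leindler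
inequality (`ent_le_of_uniformly_logConcave`). The gradient of `log G` at `h` is the displacement
of the mean of `P_h` under the density `g / G h`, and by Hoeffding's lemma and the Gibbs variational
inequality its square is at most `2 Ent_{P_h} g / G h` (`sq_mean_shift_le`). Altogether
`Ent_ν g ≤ (1 + c / (1 - c)) ∫ Ent_{P_h} g dϱ`, with prefactor `1 / (1 - c)` (`ent_quadratic_le`).

Tensorization of the single-site inequality (`ent_sq_pi_le`) bounds `Ent_{P_h} (F²)`, which proves
the claim for positive `F`; the general case follows by applying it to `√(F² + ε)`
(`ent_sq_le_of_pos`).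
-/

open MeasureTheory Matrix Real

/-- Entropy of a nonnegative function `f` with respect to a measure `m`. -/
noncomputable def ent {X : Type*} [MeasurableSpace X]
    (m : MeasureTheory.Measure X) (f : X → ℝ) : ℝ :=
  (∫ x, f x * Real.log (f x) ∂m) - (∫ x, f x ∂m) * Real.log (∫ x, f x ∂m)

/-! ### The Prékopa–Leindler inequality -/

section PrekopaLeindler

open scoped Pointwise

/-- One-dimensional Brunn–Minkowski for compact sets: the translates `K + min L` and `max K + L`
lie in `K + L` and overlap in one point. -/
lemma volume_add_volume_le_of_isCompact {K L S : Set ℝ} (hK : IsCompact K) (hL : IsCompact L)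
    (hK0 : K.Nonempty) (hL0 : L.Nonempty) (hS : ∀ x ∈ K, ∀ y ∈ L, x + y ∈ S) :
    volume K + volume L ≤ volume S := by
  have hα := hK.sSup_mem hK0
  have hβ := hL.sInf_mem hL0
  set α := sSup K
  set β := sInf L
  have hKα : ∀ x ∈ K, x ≤ α := fun x hx => le_csSup hK.bddAbove hx
  have hLβ : ∀ y ∈ L, β ≤ y := fun y hy => csInf_le hL.bddBelow hy
  have h1 : volume ((fun x => x + β) '' K) = volume K := by simp
  have h2 : volume ((fun y => α + y) '' L) = volume L := by simp
  rw [← h1, ← h2]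
  have hm : MeasurableSet ((fun y => α + y) '' L) :=
    (hL.image (by fun_prop)).isClosed.measurableSet
  rw [← measure_union₀ hm.nullMeasurableSet]
  · apply measure_mono
    rintro _ (⟨x, hx, rfl⟩ | ⟨y, hy, rfl⟩)
    · exact hS x hx β hβ
    · exact hS α hα y hy
  · refine measure_mono_null (t := {α + β}) ?_ (by simp)
    rintro z ⟨⟨x, hx, rfl⟩, ⟨y, hy, h⟩⟩
    have := hKα x hx
    have := hLβ y hy
    simp only [Set.mem_singleton_iff] at *
    linarith

/-- One-dimensional Brunn–Minkowski inequality. -/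
lemma volume_combo_le {A B S : Set ℝ} {t s : ℝ} (ht : 0 < t) (hs : 0 < s)
    (hA : MeasurableSet A) (hB : MeasurableSet B) (hA0 : A.Nonempty) (hB0 : B.Nonempty)
    (hS : ∀ x ∈ A, ∀ y ∈ B, t * x + s * y ∈ S) :
    ENNReal.ofReal t * volume A + ENNReal.ofReal s * volume B ≤ volume S := by
  obtain ⟨a, ha⟩ := hA0
  obtain ⟨b, hb⟩ := hB0
  have key : ∀ K L : Set ℝ, K ⊆ A → IsCompact K → L ⊆ B → IsCompact L →
      ENNReal.ofReal t * volume K + ENNReal.ofReal s * volume L ≤ volume S := by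
    intro K L hKA hK hLB hL
    have h1 : ENNReal.ofReal t * volume K ≤ volume ((fun x => t * x) '' (insert a K)) := by
      have : (fun x => t * x) '' (insert a K) = t • (insert a K) := rfl
      rw [this, Measure.addHaar_smul]
      simp only [Module.finrank_self, pow_one, abs_of_pos ht]
      gcongr
      exact Set.subset_insert _ _
    have h2 : ENNReal.ofReal s * volume L ≤ volume ((fun x => s * x) '' (insert b L)) := by
      have : (fun x => s * x) '' (insert b L) = s • (insert b L) := rfl
      rw [this, Measure.addHaar_smul]
      simp only [Module.finrank_self, pow_one, abs_of_pos hs]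
      gcongr
      exact Set.subset_insert _ _
    refine (add_le_add h1 h2).trans (volume_add_volume_le_of_isCompact
      ((hK.insert a).image (by fun_prop)) ((hL.insert b).image (by fun_prop))
      (Set.Nonempty.image _ ⟨a, by simp⟩) (Set.Nonempty.image _ ⟨b, by simp⟩) ?_)
    rintro _ ⟨x, hx, rfl⟩ _ ⟨y, hy, rfl⟩
    exact hS x (Set.insert_subset ha hKA hx) y (Set.insert_subset hb hLB hy)
  rw [hA.measure_eq_iSup_isCompact, hB.measure_eq_iSup_isCompact]
  simp only [ENNReal.mul_iSup, iSup_and']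
  refine ENNReal.biSup_add_biSup_le' (p := fun K => K ⊆ A ∧ IsCompact K)
    (q := fun L => L ⊆ B ∧ IsCompact L) ⟨∅, by simp⟩ ⟨∅, by simp⟩ ?_
  intro K hK L hL
  exact key K L hK.1 hK.2 hL.1 hL.2

lemma ennreal_geom_le_arith {t s : ℝ} (ht : 0 < t) (hs : 0 < s) (hts : t + s = 1)
    (p q : ENNReal) : p ^ t * q ^ s ≤ ENNReal.ofReal t * p + ENNReal.ofReal s * q := by
  by_cases hp : p = ⊤
  · subst hp; simp [ENNReal.mul_top, ht]
  by_cases hq : q = ⊤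
  · subst hq; simp [ENNReal.mul_top, hs]
  lift p to NNReal using hp
  lift q to NNReal using hq
  have := NNReal.geom_mean_le_arith_mean2_weighted ⟨t, ht.le⟩ ⟨s, hs.le⟩ p q
    (NNReal.eq hts)
  rw [← ENNReal.coe_rpow_of_nonneg _ ht.le, ← ENNReal.coe_rpow_of_nonneg _ hs.le,
    ENNReal.ofReal_eq_coe_nnreal ht.le, ENNReal.ofReal_eq_coe_nnreal hs.le]
  exact_mod_cast this

/-- Prékopa–Leindler in dimension one, for real-valued functions with supremum `1`: the
superlevel sets of `u` and `v` at every level below `1` are nonempty, so one-dimensional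
Brunn–Minkowski applies to them and integrates over the level. -/
lemma prekopa_leindler_sup_one {t s : ℝ} (ht : 0 < t) (hs : 0 < s) (hts : t + s = 1)
    {u v w : ℝ → ℝ} (hu : Measurable u) (hv : Measurable v) (hw : Measurable w)
    (hu0 : ∀ x, 0 ≤ u x) (hv0 : ∀ x, 0 ≤ v x) (hw0 : ∀ x, 0 ≤ w x)
    (hu1 : ∀ x, u x ≤ 1) (hv1 : ∀ x, v x ≤ 1)
    (hus : ∀ l < 1, ∃ x, l < u x) (hvs : ∀ l < 1, ∃ x, l < v x)
    (h : ∀ x y, u x ^ t * v y ^ s ≤ w (t * x + s * y)) :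
    (∫⁻ x, ENNReal.ofReal (u x)) ^ t * (∫⁻ x, ENNReal.ofReal (v x)) ^ s
      ≤ ∫⁻ x, ENNReal.ofReal (w x) := by
  refine (ennreal_geom_le_arith ht hs hts _ _).trans ?_
  rw [lintegral_eq_lintegral_meas_lt _ (.of_forall hu0) hu.aemeasurable,
    lintegral_eq_lintegral_meas_lt _ (.of_forall hv0) hv.aemeasurable,
    lintegral_eq_lintegral_meas_lt _ (.of_forall hw0) hw.aemeasurable]
  have hmono : ∀ f : ℝ → ℝ, Measurable fun l : ℝ => volume {x | l < f x} := fun f =>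
    (Antitone.measurable fun a b hab =>
      measure_mono fun x (hx : b < f x) => lt_of_le_of_lt hab hx)
  rw [← lintegral_const_mul _ (hmono u), ← lintegral_const_mul _ (hmono v),
    ← lintegral_add_left ((hmono u).const_mul _)]
  refine setLIntegral_mono (hmono w) ?_
  intro l hl
  have hl : 0 < l := hl
  by_cases hl1 : l < 1
  · refine volume_combo_le ht hs (measurableSet_lt measurable_const hu)
      (measurableSet_lt measurable_const hv) (hus l hl1) (hvs l hl1) ?_
    intro x hx y hy
    refine lt_of_lt_of_le ?_ (h x y)
    have h1 : l = l ^ t * l ^ s := by rw [← Real.rpow_add hl, hts, Real.rpow_one]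
    rw [h1]
    exact mul_lt_mul'' (Real.rpow_lt_rpow hl.le hx ht) (Real.rpow_lt_rpow hl.le hy hs)
      (by positivity) (by positivity)
  · have e1 : {x | l < u x} = ∅ := by
      ext x; simpa using (hu1 x).trans (not_lt.1 hl1)
    have e2 : {x | l < v x} = ∅ := by
      ext x; simpa using (hv1 x).trans (not_lt.1 hl1)
    simp [e1, e2]

/-- Dividing bounded functions by their suprema reduces to supremum `1`. -/
lemma prekopa_leindler_of_iSup_ne_top {t s : ℝ} (ht : 0 < t) (hs : 0 < s) (hts : t + s = 1)
    {u v w : ℝ → ENNReal} (hu : Measurable u) (hv : Measurable v) (hw : Measurable w)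
    (hut : ⨆ x, u x ≠ ⊤) (hvt : ⨆ x, v x ≠ ⊤)
    (h : ∀ x y, u x ^ t * v y ^ s ≤ w (t * x + s * y)) :
    (∫⁻ x, u x) ^ t * (∫⁻ x, v x) ^ s ≤ ∫⁻ x, w x := by
  by_cases hu0 : ⨆ x, u x = 0
  · have : ∀ x, u x = 0 := by simpa using hu0
    simp [this, ht]
  by_cases hv0 : ⨆ x, v x = 0
  · have : ∀ x, v x = 0 := by simpa using hv0
    simp [this, hs]
  have hua : ∀ x, u x ≤ ⨆ x, u x := le_iSup u
  have hvb : ∀ x, v x ≤ ⨆ x, v x := le_iSup v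
  have hus : ∀ c, c < ⨆ x, u x → ∃ x, c < u x := fun c hc => lt_iSup_iff.1 hc
  have hvs : ∀ c, c < ⨆ x, v x → ∃ x, c < v x := fun c hc => lt_iSup_iff.1 hc
  generalize (⨆ x, u x) = a at *
  generalize (⨆ x, v x) = b at *
  have hk0 : a ^ t * b ^ s ≠ 0 := by simp [hu0, hv0, hut, hvt]
  have hkt : a ^ t * b ^ s ≠ ⊤ :=
    ENNReal.mul_ne_top (ENNReal.rpow_ne_top_of_nonneg ht.le hut)
      (ENNReal.rpow_ne_top_of_nonneg hs.le hvt)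
  have hfac : ∀ p q : ENNReal, p ^ t * q ^ s / (a ^ t * b ^ s) = (p / a) ^ t * (q / b) ^ s := by
    intro p q
    rw [ENNReal.div_rpow_of_nonneg _ _ ht.le, ENNReal.div_rpow_of_nonneg _ _ hs.le,
      ENNReal.mul_div_mul_comm (Or.inr (ENNReal.rpow_ne_top_of_nonneg hs.le hvt))
        (Or.inr (by simp [hv0, hvt]))]
  have hu1 : ∀ x, u x / a ≤ 1 := fun x => ENNReal.div_le_of_le_mul (by simpa using hua x)
  have hv1 : ∀ x, v x / b ≤ 1 := fun x => ENNReal.div_le_of_le_mul (by simpa using hvb x)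
  have hne : ∀ p : ENNReal, p ≤ 1 → p ≠ ⊤ := fun p hp => ne_top_of_le_ne_top ENNReal.one_ne_top hp
  have sup_one : ∀ (f : ℝ → ENNReal) (c : ENNReal), c ≠ 0 → c ≠ ⊤ → (∀ x, f x / c ≤ 1) →
      (∀ d, d < c → ∃ x, d < f x) → ∀ l : ℝ, l < 1 → ∃ x, l < (f x / c).toReal := by
    intro f c hc0 hct hf1 hf l hl
    rcases lt_or_ge l 0 with hl0 | hl0
    · exact ⟨0, hl0.trans_le ENNReal.toReal_nonneg⟩
    obtain ⟨x, hx⟩ := hf (ENNReal.ofReal l * c) (by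
      calc ENNReal.ofReal l * c < 1 * c := by
            rw [ENNReal.mul_lt_mul_iff_left hc0 hct]; simpa using hl
        _ = c := one_mul c)
    refine ⟨x, ?_⟩
    rw [← ENNReal.ofReal_lt_iff_lt_toReal hl0 (hne _ (hf1 x))]
    exact (ENNReal.lt_div_iff_mul_lt (Or.inl hc0) (Or.inl hct)).2 hx
  have key := prekopa_leindler_sup_one ht hs hts
    (u := fun x => (u x / a).toReal) (v := fun x => (v x / b).toReal)
    (w := fun x => (min (w x / (a ^ t * b ^ s)) 1).toReal)
    (by fun_prop) (by fun_prop) (by fun_prop)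
    (fun _ => ENNReal.toReal_nonneg) (fun _ => ENNReal.toReal_nonneg)
    (fun _ => ENNReal.toReal_nonneg)
    (fun x => by simpa using ENNReal.toReal_mono ENNReal.one_ne_top (hu1 x))
    (fun x => by simpa using ENNReal.toReal_mono ENNReal.one_ne_top (hv1 x))
    (sup_one u a hu0 hut hu1 hus) (sup_one v b hv0 hvt hv1 hvs)
    (by
      intro x y
      rw [ENNReal.toReal_rpow, ENNReal.toReal_rpow, ← ENNReal.toReal_mul]
      refine ENNReal.toReal_mono (hne _ (min_le_right _ _)) (le_min ?_ ?_)
      · rw [← hfac]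
        gcongr
        exact h x y
      · calc (u x / a) ^ t * (v y / b) ^ s ≤ 1 ^ t * 1 ^ s := by
              gcongr
              · exact hu1 x
              · exact hv1 y
          _ = 1 := by simp)
  simp only [ENNReal.ofReal_toReal (hne _ (hu1 _)), ENNReal.ofReal_toReal (hne _ (hv1 _)),
    ENNReal.ofReal_toReal (hne _ (min_le_right _ _))] at key
  have key2 := key.trans (lintegral_mono fun x => min_le_left (w x / (a ^ t * b ^ s)) 1)
  simp only [div_eq_mul_inv] at key2
  rw [lintegral_mul_const _ hu, lintegral_mul_const _ hv, lintegral_mul_const _ hw] at key2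
  simp only [← div_eq_mul_inv] at key2
  rw [← hfac] at key2
  have key3 := mul_le_mul_left key2 (a ^ t * b ^ s)
  rwa [ENNReal.div_mul_cancel hk0 hkt, ENNReal.div_mul_cancel hk0 hkt] at key3

/-- The Prékopa–Leindler inequality in dimension one; truncating `u` and `v` at level `n` and
letting `n → ∞` reduces to bounded functions. -/
lemma prekopa_leindler_one {t s : ℝ} (ht : 0 < t) (hs : 0 < s) (hts : t + s = 1)
    {u v w : ℝ → ENNReal} (hu : Measurable u) (hv : Measurable v) (hw : Measurable w)
    (h : ∀ x y, u x ^ t * v y ^ s ≤ w (t * x + s * y)) :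
    (∫⁻ x, u x) ^ t * (∫⁻ x, v x) ^ s ≤ ∫⁻ x, w x := by
  have hlim : ∀ f : ℝ → ENNReal, Measurable f →
      Filter.Tendsto (fun n : ℕ => ∫⁻ x, min (f x) n) Filter.atTop (nhds (∫⁻ x, f x)) := by
    intro f hf
    refine lintegral_tendsto_of_tendsto_of_monotone (fun n => by fun_prop) ?_ ?_
    · refine .of_forall fun x n m hnm => ?_
      simp only
      gcongr
    · refine .of_forall fun x => ?_
      have : Filter.Tendsto (fun n : ℕ => min (f x) (n : ENNReal)) Filter.atTop
          (nhds (min (f x) ⊤)) :=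
        tendsto_const_nhds.min ENNReal.tendsto_nat_nhds_top
      simpa using this
  have step : ∀ n m : ℕ, (∫⁻ x, min (u x) n) ^ t * (∫⁻ x, min (v x) m) ^ s ≤ ∫⁻ x, w x := by
    intro n m
    refine prekopa_leindler_of_iSup_ne_top ht hs hts (by fun_prop) (by fun_prop) hw ?_ ?_ ?_
    · exact ne_top_of_le_ne_top (ENNReal.natCast_ne_top n) (iSup_le fun x => min_le_right _ _)
    · exact ne_top_of_le_ne_top (ENNReal.natCast_ne_top m) (iSup_le fun x => min_le_right _ _)
    · intro x y
      refine le_trans ?_ (h x y)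
      gcongr <;> exact min_le_left _ _
  by_cases hV : ∫⁻ x, v x = 0
  · simp [hV, hs]
  by_cases hU : ∫⁻ x, u x = 0
  · simp [hU, ht]
  refine le_of_tendsto (ENNReal.Tendsto.mul
    ((ENNReal.continuous_rpow_const.tendsto _).comp (hlim u hu)) ?_
    ((ENNReal.continuous_rpow_const.tendsto _).comp (hlim v hv)) ?_)
    (.of_forall fun n => step n n)
  · left; simp [hU, ht, ht.le]
  · left; simp [hV, hs, hs.le]

/-- The Prékopa–Leindler inequality on `ℝ^Λ`: integrating out one coordinate at a time preserves
the hypothesis, by the one-dimensional case. -/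
lemma prekopa_leindler {Λ : Type*} [Fintype Λ] [DecidableEq Λ]
    {t s : ℝ} (ht : 0 < t) (hs : 0 < s) (hts : t + s = 1)
    {u v w : (Λ → ℝ) → ENNReal} (hu : Measurable u) (hv : Measurable v) (hw : Measurable w)
    (h : ∀ x y, u x ^ t * v y ^ s ≤ w (t • x + s • y)) :
    (∫⁻ x, u x) ^ t * (∫⁻ x, v x) ^ s ≤ ∫⁻ x, w x := by
  have main : ∀ I : Finset Λ, ∀ x y : Λ → ℝ,
      (lmarginal (fun _ : Λ => (volume : Measure ℝ)) I u x) ^ t *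
        (lmarginal (fun _ : Λ => (volume : Measure ℝ)) I v y) ^ s
        ≤ lmarginal (fun _ : Λ => (volume : Measure ℝ)) I w (t • x + s • y) := by
    intro I
    induction I using Finset.induction_on with
    | empty => simpa using h
    | insert i I hi ih =>
      intro x y
      rw [lmarginal_insert _ hu hi, lmarginal_insert _ hv hi, lmarginal_insert _ hw hi]
      refine prekopa_leindler_one ht hs hts ?_ ?_ ?_ ?_
      · exact (hu.lmarginal _).comp (measurable_update x)
      · exact (hv.lmarginal _).comp (measurable_update y)
      · exact (hw.lmarginal _).comp (measurable_update _)
      · intro a b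
        refine (ih (Function.update x i a) (Function.update y i b)).trans_eq ?_
        congr 1
        ext j
        by_cases hj : j = i
        · subst hj; simp
        · simp [hj]
  have := main Finset.univ 0 0
  simpa [lmarginal_univ, volume_pi] using this

end PrekopaLeindler

/-! ### Entropy -/

/-- A continuous function is integrable against a finite measure carried by a compact set. -/
lemma integrable_of_ae_mem_compact {X : Type*} [TopologicalSpace X] [T2Space X]
    [MeasurableSpace X] [OpensMeasurableSpace X] {m : Measure X} [IsFiniteMeasure m]
    {K : Set X} (hK : IsCompact K) (hm : ∀ᵐ x ∂m, x ∈ K) {f : X → ℝ} (hf : Continuous f) :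
    Integrable f m := by
  have h : m.restrict K = m := Measure.restrict_eq_self_of_ae_mem hm
  rw [← h]
  exact hf.continuousOn.integrableOn_compact hK

lemma integral_pos_of_pos {X : Type*} [MeasurableSpace X] {m : Measure X} [NeZero m]
    {f : X → ℝ} (hf : Integrable f m) (hpos : ∀ x, 0 < f x) : 0 < ∫ x, f x ∂m := by
  rw [integral_pos_iff_support_of_nonneg (fun x => (hpos x).le) hf]
  have : Function.support f = Set.univ := by
    ext x; simpa using (hpos x).ne'
  rw [this]
  simpa using NeZero.ne m

/-- The elementary inequality `log y ≤ y - 1` at `y = b / a`. -/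
lemma mul_log_add_sub_le {a b : ℝ} (ha : 0 < a) (hb : 0 < b) :
    a * Real.log b - a * Real.log a ≤ b - a := by
  have h := Real.log_le_sub_one_of_pos (div_pos hb ha)
  rw [Real.log_div hb.ne' ha.ne'] at h
  have h2 := mul_le_mul_of_nonneg_left h ha.le
  have h3 : a * (b / a - 1) = b - a := by field_simp
  linarith

/-- The Gibbs variational inequality. -/
lemma integral_mul_le_ent {X : Type*} [MeasurableSpace X] {m : Measure X} [NeZero m]
    {g ψ : X → ℝ} (hg : ∀ x, 0 < g x) (hgi : Integrable g m)
    (hgl : Integrable (fun x => g x * Real.log (g x)) m)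
    (hgψ : Integrable (fun x => g x * ψ x) m) (hψ : Integrable (fun x => Real.exp (ψ x)) m) :
    ∫ x, g x * ψ x ∂m ≤ ent m g + (∫ x, g x ∂m) * Real.log (∫ x, Real.exp (ψ x) ∂m) := by
  have hτ := integral_pos_of_pos hgi hg
  have hκ := integral_pos_of_pos hψ (fun x => Real.exp_pos _)
  unfold ent
  set τ := ∫ x, g x ∂m
  set κ := ∫ x, Real.exp (ψ x) ∂m
  have hpt : ∀ x, g x * ψ x ≤ g x * Real.log (g x) + g x * (Real.log κ - Real.log τ - 1)
      + (τ / κ) * Real.exp (ψ x) := by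
    intro x
    have h := mul_log_add_sub_le (hg x) (b := τ / κ * Real.exp (ψ x)) (by positivity)
    rw [Real.log_mul (by positivity) (by positivity), Real.log_exp,
      Real.log_div hτ.ne' hκ.ne'] at h
    nlinarith
  have h := integral_mono hgψ ((hgl.add (hgi.mul_const _)).add (hψ.const_mul _)) hpt
  simp only [Pi.add_apply] at h
  rw [integral_add (by exact hgl.add (hgi.mul_const _)) (hψ.const_mul _),
    integral_add hgl (hgi.mul_const _), integral_mul_const, integral_const_mul] at h
  have e : τ / κ * κ = τ := by field_simp
  change _ ≤ _ + τ * _ + τ / κ * κ at h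
  rw [e] at h
  linarith

/-- The entropy is the minimum over `τ` of `∫ (g log g - g log τ - g + τ)`. -/
lemma ent_le_integral {X : Type*} [MeasurableSpace X] {m : Measure X} [IsProbabilityMeasure m]
    {g : X → ℝ} (hg : ∀ x, 0 < g x) (hgi : Integrable g m)
    (hgl : Integrable (fun x => g x * Real.log (g x)) m) {τ : ℝ} (hτ : 0 < τ) :
    ent m g ≤ ∫ x, (g x * Real.log (g x) - g x * Real.log τ - g x + τ) ∂m := by
  have hp := integral_pos_of_pos hgi hg
  rw [integral_add (by exact (hgl.sub (hgi.mul_const _)).sub hgi) (integrable_const _),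
    integral_sub (by exact hgl.sub (hgi.mul_const _)) hgi, integral_sub hgl (hgi.mul_const _),
    integral_mul_const]
  simp only [integral_const, probReal_univ, one_smul]
  unfold ent
  have := mul_log_add_sub_le hp hτ
  linarith

/-! ### Tensorization -/

section Tensor

/-- Averaging over the spin at site `i`. -/
noncomputable def siteAvg {Λ : Type*} [DecidableEq Λ] (β : Λ → Measure ℝ) (i : Λ)
    (f : (Λ → ℝ) → ℝ) (σ : Λ → ℝ) : ℝ :=
  ∫ a, f (Function.update σ i a) ∂(β i)

lemma pi_ae_mem_cube {Λ : Type*} [Fintype Λ] {β : Λ → Measure ℝ} [∀ x, IsProbabilityMeasure (β x)]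
    (hβ : ∀ x, ∀ᵐ a ∂(β x), a ∈ Set.Icc (-1 : ℝ) 1) :
    ∀ᵐ σ ∂(Measure.pi β), σ ∈ Set.Icc (-1 : Λ → ℝ) 1 := by
  have h : ∀ x, ∀ᵐ σ ∂(Measure.pi β), σ x ∈ Set.Icc (-1 : ℝ) 1 := fun x =>
    (measurePreserving_eval β x).quasiMeasurePreserving.ae (hβ x)
  filter_upwards [ae_all_iff.2 h] with σ hσ
  exact ⟨fun x => (hσ x).1, fun x => (hσ x).2⟩

/-- Resampling the spin at site `i` leaves the product measure invariant. -/
lemma measurePreserving_update {Λ : Type*} [Fintype Λ] [DecidableEq Λ]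
    (β : Λ → Measure ℝ) [∀ x, IsProbabilityMeasure (β x)] (i : Λ) :
    MeasurePreserving (fun p : (Λ → ℝ) × ℝ => Function.update p.1 i p.2)
      ((Measure.pi β).prod (β i)) (Measure.pi β) := by
  have hm : Measurable (fun p : (Λ → ℝ) × ℝ => Function.update p.1 i p.2) := by
    rw [measurable_pi_iff]
    intro j
    by_cases hj : j = i
    · subst hj; simpa using measurable_snd
    · simp only [Function.update_of_ne hj]; fun_prop
  refine ⟨hm, ?_⟩
  symm
  apply Measure.pi_eq
  intro s hs
  rw [Measure.map_apply hm (MeasurableSet.univ_pi hs)]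
  have : (fun p : (Λ → ℝ) × ℝ => Function.update p.1 i p.2) ⁻¹' (Set.univ.pi s)
      = (Set.univ.pi (Function.update s i Set.univ)) ×ˢ s i := by
    ext ⟨σ, a⟩
    simp only [Set.mem_preimage, Set.mem_pi, Set.mem_univ, true_implies, Set.mem_prod]
    constructor
    · intro h
      refine ⟨fun j => ?_, by simpa using h i⟩
      by_cases hj : j = i
      · subst hj; simp
      · simpa [hj] using h j
    · rintro ⟨h1, h2⟩ j
      by_cases hj : j = i
      · subst hj; simpa using h2
      · simpa [hj] using h1 j
  rw [this, Measure.prod_prod, Measure.pi_pi, ← Finset.mul_prod_erase _ _ (Finset.mem_univ i),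
    ← Finset.mul_prod_erase _ (fun j => β j (s j)) (Finset.mem_univ i)]
  simp only [Function.update_self, measure_univ, one_mul]
  rw [mul_comm]
  congr 1
  refine Finset.prod_congr rfl fun j hj => ?_
  rw [Function.update_of_ne (Finset.ne_of_mem_erase hj)]

variable {Λ : Type*} [Fintype Λ] [DecidableEq Λ] {β : Λ → Measure ℝ}
  [∀ x, IsProbabilityMeasure (β x)]

lemma continuous_siteAvg (hβ : ∀ x, ∀ᵐ a ∂(β x), a ∈ Set.Icc (-1 : ℝ) 1)
    (i : Λ) {f : (Λ → ℝ) → ℝ} (hf : Continuous f) :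
    Continuous (siteAvg β i f) := by
  have h : (β i).restrict (Set.Icc (-1 : ℝ) 1) = β i :=
    Measure.restrict_eq_self_of_ae_mem (hβ i)
  unfold siteAvg
  rw [← h]
  refine continuous_parametric_integral_of_continuous ?_ isCompact_Icc
  simp only [Function.uncurry_def]
  fun_prop

lemma integral_siteAvg (hβ : ∀ x, ∀ᵐ a ∂(β x), a ∈ Set.Icc (-1 : ℝ) 1)
    (i : Λ) {f : (Λ → ℝ) → ℝ} (hf : Continuous f) :
    ∫ σ, siteAvg β i f σ ∂(Measure.pi β) = ∫ σ, f σ ∂(Measure.pi β) := by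
  have hp := measurePreserving_update β i
  have hfi : Integrable f (Measure.pi β) :=
    integrable_of_ae_mem_compact isCompact_Icc (pi_ae_mem_cube hβ) hf
  have e := hp.integrable_comp_of_integrable hfi
  unfold siteAvg
  rw [← integral_prod (fun p : (Λ → ℝ) × ℝ => f (Function.update p.1 i p.2)) e]
  conv_rhs => rw [← hp.map_eq]
  rw [integral_map hp.measurable.aemeasurable]
  exact hf.aestronglyMeasurable

/-- Subadditivity of entropy for product measures. Averaging over the sites one after the other
replaces `g` by its mean, and by the Gibbs inequality the step at site `i` costs at most the
averaged entropy at `i`. -/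
lemma ent_pi_le (hβ : ∀ x, ∀ᵐ a ∂(β x), a ∈ Set.Icc (-1 : ℝ) 1)
    {g : (Λ → ℝ) → ℝ} (hg : Continuous g) (hpos : ∀ σ, 0 < g σ) :
    ent (Measure.pi β) g
      ≤ ∑ i, ∫ σ, ent (β i) (fun a => g (Function.update σ i a)) ∂(Measure.pi β) := by
  have hInt : ∀ f : (Λ → ℝ) → ℝ, Continuous f → Integrable f (Measure.pi β) := fun f hf =>
    integrable_of_ae_mem_compact isCompact_Icc (pi_ae_mem_cube hβ) hf
  have hInt1 : ∀ i, ∀ f : ℝ → ℝ, Continuous f → Integrable f (β i) := fun i f hf =>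
    integrable_of_ae_mem_compact isCompact_Icc (hβ i) hf
  have hgl : Continuous fun σ => g σ * Real.log (g σ) :=
    hg.mul (hg.log fun σ => (hpos σ).ne')
  have main : ∀ I : Finset Λ, ∃ h : (Λ → ℝ) → ℝ, Continuous h ∧ (∀ σ, 0 < h σ) ∧
      (∀ i ∈ I, ∀ σ a, h (Function.update σ i a) = h σ) ∧
      ∫ σ, h σ ∂(Measure.pi β) = ∫ σ, g σ ∂(Measure.pi β) ∧
      ∫ σ, g σ * Real.log (g σ) ∂(Measure.pi β) - ∫ σ, g σ * Real.log (h σ) ∂(Measure.pi β)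
        ≤ ∑ i ∈ I, ∫ σ, ent (β i) (fun a => g (Function.update σ i a)) ∂(Measure.pi β) := by
    intro I
    induction I using Finset.induction_on with
    | empty => exact ⟨g, hg, hpos, by simp, rfl, by simp⟩
    | insert i I hi ih =>
      obtain ⟨h, hc, hp, hI, hmean, hle⟩ := ih
      have hc' := continuous_siteAvg hβ i hc
      have hup : ∀ σ : Λ → ℝ, Continuous fun a : ℝ => Function.update σ i a := fun σ => by fun_prop
      have hp' : ∀ σ, 0 < siteAvg β i h σ := fun σ =>
        integral_pos_of_pos (hInt1 i _ (hc.comp (hup σ))) fun a => hp _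
      have hi' : ∀ σ a, siteAvg β i h (Function.update σ i a) = siteAvg β i h σ := by
        intro σ a; simp [siteAvg]
      refine ⟨siteAvg β i h, hc', hp', ?_, ?_, ?_⟩
      · intro j hj σ a
        by_cases hji : j = i
        · subst hji; exact hi' σ a
        · have hjI : j ∈ I := by simpa [hji] using hj
          unfold siteAvg
          congr 1
          ext b
          rw [Function.update_comm hji, hI j hjI]
      · rw [integral_siteAvg hβ i hc, hmean]
      · rw [Finset.sum_insert hi]
        -- `exp ψ` has mean `1` under `β i` for `ψ = log h - log (siteAvg h)`, so the partition term
        -- in the Gibbs inequality vanishes.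
        have hψc : Continuous fun σ => Real.log (h σ) - Real.log (siteAvg β i h σ) :=
          (hc.log fun σ => (hp σ).ne').sub (hc'.log fun σ => (hp' σ).ne')
        have hstep : ∫ σ, g σ * (Real.log (h σ) - Real.log (siteAvg β i h σ)) ∂(Measure.pi β)
            ≤ ∫ σ, ent (β i) (fun a => g (Function.update σ i a)) ∂(Measure.pi β) := by
          have hgψ : Continuous fun σ =>
              g σ * (Real.log (h σ) - Real.log (siteAvg β i h σ)) := hg.mul hψc
          rw [← integral_siteAvg hβ i hgψ]
          refine integral_mono (hInt _ (continuous_siteAvg hβ i (hg.mul hψc))) (hInt _ ?_) ?_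
          · exact (continuous_siteAvg hβ i hgl).sub ((continuous_siteAvg hβ i hg).mul
              ((continuous_siteAvg hβ i hg).log fun σ => (integral_pos_of_pos
                (hInt1 i _ (hg.comp (hup σ))) fun a => hpos _).ne'))
          · intro σ
            have hG := integral_mul_le_ent (m := β i)
              (g := fun a => g (Function.update σ i a))
              (ψ := fun a => Real.log (h (Function.update σ i a))
                - Real.log (siteAvg β i h (Function.update σ i a))) (fun a => hpos _)
              (hInt1 i _ (hg.comp (hup σ))) (hInt1 i _ (hgl.comp (hup σ)))
              (hInt1 i _ ((hg.mul hψc).comp (hup σ)))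
              (hInt1 i _ ((Real.continuous_exp.comp hψc).comp (hup σ)))
            have e1 : ∫ a, Real.exp (Real.log (h (Function.update σ i a))
                - Real.log (siteAvg β i h (Function.update σ i a))) ∂(β i) = 1 := by
              have : ∀ a, Real.exp (Real.log (h (Function.update σ i a))
                - Real.log (siteAvg β i h (Function.update σ i a)))
                = h (Function.update σ i a) / siteAvg β i h σ := by
                intro a
                rw [hi', Real.exp_sub, Real.exp_log (hp _), Real.exp_log (hp' _)]
              simp only [this, integral_div]
              exact div_self (hp' σ).ne'
            rw [e1, Real.log_one, mul_zero, add_zero] at hG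
            exact hG
        simp only [mul_sub] at hstep
        rw [integral_sub (hInt (fun σ => g σ * Real.log (h σ))
          (hg.mul (hc.log fun σ => (hp σ).ne')))
          (hInt (fun σ => g σ * Real.log (siteAvg β i h σ))
            (hg.mul (hc'.log fun σ => (hp' σ).ne')))] at hstep
        linarith
  obtain ⟨h, hc, hp, hI, hmean, hle⟩ := main Finset.univ
  have hconst : ∀ σ, h σ = h 0 := by
    intro σ
    have : ∀ I : Finset Λ, h (I.piecewise σ 0) = h 0 := by
      intro I
      induction I using Finset.induction_on with
      | empty => simp
      | insert i I hi ih => rw [Finset.piecewise_insert, hI i (Finset.mem_univ i), ih]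
    simpa using this Finset.univ
  have h0 : h 0 = ∫ σ, g σ ∂(Measure.pi β) := by
    rw [← hmean]
    simp [hconst]
  simp only [hconst, h0, integral_mul_const] at hle
  exact hle

lemma deriv_update_eq_fderiv {F : (Λ → ℝ) → ℝ} (hF : ContDiff ℝ (⊤ : ℕ∞) F) (x : Λ) (σ : Λ → ℝ) :
    deriv (fun t => F (Function.update σ x t)) (σ x) = fderiv ℝ F σ (Pi.single x 1) := by
  have h1 : HasDerivAt (fun t : ℝ => Function.update σ x t) (Pi.single x 1) (σ x) :=
    hasDerivAt_update σ x (σ x)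
  have h2 : HasFDerivAt F (fderiv ℝ F σ) (Function.update σ x (σ x)) := by
    rw [Function.update_eq_self]
    exact (hF.differentiable (by simp)).differentiableAt.hasFDerivAt
  exact (h2.comp_hasDerivAt (σ x) h1).deriv

lemma continuous_deriv_update {F : (Λ → ℝ) → ℝ} (hF : ContDiff ℝ (⊤ : ℕ∞) F) (x : Λ) :
    Continuous fun σ : Λ → ℝ => deriv (fun t => F (Function.update σ x t)) (σ x) := by
  simp only [deriv_update_eq_fderiv hF x]
  exact (hF.continuous_fderiv (by simp)).clm_apply continuous_const

/-- Tensorization of the logarithmic Sobolev inequality. -/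
lemma ent_sq_pi_le (hβ : ∀ x, ∀ᵐ a ∂(β x), a ∈ Set.Icc (-1 : ℝ) 1)
    {C : ℝ}
    (hLSI : ∀ x, ∀ f : ℝ → ℝ, ContDiff ℝ (⊤ : ℕ∞) f → (∀ a, 0 < f a) →
      ent (β x) (fun a => (f a) ^ 2) ≤ C * ∫ a, (deriv f a) ^ 2 ∂(β x))
    {F : (Λ → ℝ) → ℝ} (hF : ContDiff ℝ (⊤ : ℕ∞) F) (hpos : ∀ σ, 0 < F σ) :
    ent (Measure.pi β) (fun σ => (F σ) ^ 2)
      ≤ C * ∑ x, ∫ σ, (deriv (fun t => F (Function.update σ x t)) (σ x)) ^ 2 ∂(Measure.pi β) := by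
  have hInt : ∀ f : (Λ → ℝ) → ℝ, Continuous f → Integrable f (Measure.pi β) := fun f hf =>
    integrable_of_ae_mem_compact isCompact_Icc (pi_ae_mem_cube hβ) hf
  have hsq : Continuous fun σ => (F σ) ^ 2 := hF.continuous.pow 2
  refine (ent_pi_le hβ hsq (fun σ => pow_pos (hpos σ) 2)).trans ?_
  rw [Finset.mul_sum]
  refine Finset.sum_le_sum fun x _ => ?_
  have hD : Continuous fun σ : Λ → ℝ => (deriv (fun t => F (Function.update σ x t)) (σ x)) ^ 2 :=
    (continuous_deriv_update hF x).pow 2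
  rw [← integral_siteAvg hβ x hD, ← integral_const_mul]
  have hup : ∀ σ : Λ → ℝ, ContDiff ℝ (⊤ : ℕ∞) fun a : ℝ => Function.update σ x a :=
    fun σ => contDiff_update _ σ x
  refine integral_mono (hInt _ ?_) ((hInt _ (continuous_siteAvg hβ x hD)).const_mul _) ?_
  · have hlog := Real.continuous_mul_log
    exact (continuous_siteAvg hβ x (hlog.comp hsq)).sub (hlog.comp (continuous_siteAvg hβ x hsq))
  · intro σ
    have h := hLSI x (fun a => F (Function.update σ x a)) (hF.comp (hup σ)) (fun a => hpos _)
    simpa [siteAvg] using h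

end Tensor

/-! ### Exponential tilts of measures on the cube -/

lemma ae_mem_cube_tilted {I : Type*} {m : Measure (I → ℝ)}
    (hm : ∀ᵐ σ ∂m, σ ∈ Set.Icc (-1 : I → ℝ) 1) (f : (I → ℝ) → ℝ) :
    ∀ᵐ σ ∂(m.tilted f), σ ∈ Set.Icc (-1 : I → ℝ) 1 :=
  (tilted_absolutelyContinuous m f).ae_le hm

lemma integral_tilted_eq_div {X : Type*} [MeasurableSpace X] (m : Measure X) (u f : X → ℝ) :
    ∫ x, f x ∂(m.tilted u) = (∫ x, f x * Real.exp (u x) ∂m) / ∫ x, Real.exp (u x) ∂m := by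
  rw [integral_tilted, ← integral_div]
  congr 1
  ext x
  simp only [smul_eq_mul]
  ring

section Tilts

variable {Λ : Type*} [Fintype Λ]

lemma integrable_cube {m : Measure (Λ → ℝ)} [IsFiniteMeasure m]
    (hm : ∀ᵐ σ ∂m, σ ∈ Set.Icc (-1 : Λ → ℝ) 1) {f : (Λ → ℝ) → ℝ} (hf : Continuous f) :
    Integrable f m :=
  integrable_of_ae_mem_compact isCompact_Icc hm hf

/-- A product of exponential tilts is an exponential tilt of the product. -/
lemma pi_tilted {β : Λ → Measure ℝ} [∀ x, IsProbabilityMeasure (β x)]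
    {f : Λ → ℝ → ℝ} :
    Measure.pi (fun x => (β x).tilted (f x))
      = (Measure.pi β).tilted (fun σ => ∑ x, f x (σ x)) := by
  apply Measure.pi_eq
  intro s hs
  have hprod : ∫ σ, Real.exp (∑ x, f x (σ x)) ∂(Measure.pi β)
      = ∏ x, ∫ a, Real.exp (f x a) ∂(β x) := by
    simp only [Real.exp_sum]
    exact integral_fintype_prod_eq_prod (fun x a => Real.exp (f x a))
  rw [tilted_apply_eq_ofReal_integral' _ (MeasurableSet.univ_pi hs), hprod,
    Measure.restrict_pi_pi]
  have e : ∀ x, ((β x).tilted (f x)) (s x)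
      = ENNReal.ofReal (∫ a in s x, Real.exp (f x a) / ∫ a, Real.exp (f x a) ∂(β x) ∂(β x)) :=
    fun x => tilted_apply_eq_ofReal_integral' _ (hs x)
  simp only [e]
  rw [← ENNReal.ofReal_prod_of_nonneg]
  · congr 1
    rw [← integral_fintype_prod_eq_prod
      (fun x a => Real.exp (f x a) / ∫ a, Real.exp (f x a) ∂(β x))]
    congr 1
    ext σ
    rw [Finset.prod_div_distrib, Real.exp_sum]
  · intro x _
    refine integral_nonneg fun a => ?_
    have : 0 ≤ ∫ a, Real.exp (f x a) ∂(β x) := integral_nonneg fun a => (Real.exp_pos _).le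
    have := (Real.exp_pos (f x a)).le
    positivity

/-- Hoeffding's lemma for a random variable with values in `[-b, b]`. -/
lemma integral_exp_le_hoeffding {X : Type*} [MeasurableSpace X] {m : Measure X}
    [IsProbabilityMeasure m] {Y : X → ℝ} (hY : AEMeasurable Y m) {b : ℝ}
    (hb : ∀ᵐ x ∂m, Y x ∈ Set.Icc (-b) b) :
    ∫ x, Real.exp (Y x) ∂m ≤ Real.exp (∫ x, Y x ∂m + b ^ 2 / 2) := by
  have h := (ProbabilityTheory.hasSubgaussianMGF_of_mem_Icc hY hb).mgf_le 1
  simp only [ProbabilityTheory.mgf, one_mul, Real.exp_sub] at h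
  rw [integral_div, div_le_iff₀ (Real.exp_pos _), ← Real.exp_add] at h
  refine h.trans (Real.exp_le_exp.2 ?_)
  have : (((‖b - -b‖₊ / 2) ^ 2 : NNReal) : ℝ) = b ^ 2 := by
    push_cast
    rw [div_pow, Real.norm_eq_abs, sq_abs]
    ring
  rw [this]
  linarith

lemma exp_le_integral_exp {X : Type*} [MeasurableSpace X] {m : Measure X}
    [IsProbabilityMeasure m] {Y : X → ℝ} (hY : Integrable Y m)
    (he : Integrable (fun x => Real.exp (Y x)) m) :
    Real.exp (∫ x, Y x ∂m) ≤ ∫ x, Real.exp (Y x) ∂m :=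
  convexOn_exp.map_integral_le Real.continuous_exp.continuousOn isClosed_univ
    (.of_forall fun _ => Set.mem_univ _) hY he

lemma integral_dotProduct {m : Measure (Λ → ℝ)} [IsProbabilityMeasure m]
    (hm : ∀ᵐ σ ∂m, σ ∈ Set.Icc (-1 : Λ → ℝ) 1) (k : Λ → ℝ) :
    ∫ σ, k ⬝ᵥ σ ∂m = k ⬝ᵥ (fun x => ∫ σ, σ x ∂m) := by
  simp only [dotProduct]
  rw [integral_finsetSum _ fun x _ => integrable_cube hm (by fun_prop)]
  simp only [integral_const_mul]

/-- Sub-Gaussian bound for a product measure on the cube, with the sharp constant `1`. -/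
lemma integral_exp_dotProduct_pi_le {β : Λ → Measure ℝ} [∀ x, IsProbabilityMeasure (β x)]
    (hβ : ∀ x, ∀ᵐ a ∂(β x), a ∈ Set.Icc (-1 : ℝ) 1) (k : Λ → ℝ) :
    ∫ σ, Real.exp (k ⬝ᵥ σ) ∂(Measure.pi β)
      ≤ Real.exp (k ⬝ᵥ (fun x => ∫ σ, σ x ∂(Measure.pi β)) + k ⬝ᵥ k / 2) := by
  have hmean : ∀ x, ∫ σ, σ x ∂(Measure.pi β) = ∫ a, a ∂(β x) := by
    intro x
    have h := (measurePreserving_eval β x)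
    conv_rhs => rw [← h.map_eq]
    rw [integral_map h.measurable.aemeasurable (by fun_prop)]
  simp only [hmean, dotProduct, Real.exp_sum, Finset.sum_div, ← Finset.sum_add_distrib]
  rw [integral_fintype_prod_eq_prod (fun x a => Real.exp (k x * a))]
  refine Finset.prod_le_prod (fun x _ => integral_nonneg fun a => (Real.exp_pos _).le) ?_
  intro x _
  have h := integral_exp_le_hoeffding (m := β x) (Y := fun a => k x * a) (b := |k x|)
    (by fun_prop) (by
      filter_upwards [hβ x] with a ha
      refine Set.mem_Icc.2 (abs_le.1 ?_)
      rw [abs_mul]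
      have : |a| ≤ 1 := abs_le.2 ha
      nlinarith [abs_nonneg (k x)])
  rw [integral_const_mul, sq_abs, pow_two] at h
  exact h

/-- Sub-Gaussian bound for an arbitrary measure on the cube, with the dimension as constant. -/
lemma integral_exp_dotProduct_le {m : Measure (Λ → ℝ)} [IsProbabilityMeasure m]
    (hm : ∀ᵐ σ ∂m, σ ∈ Set.Icc (-1 : Λ → ℝ) 1) (k : Λ → ℝ) :
    ∫ σ, Real.exp (k ⬝ᵥ σ) ∂m
      ≤ Real.exp (k ⬝ᵥ (fun x => ∫ σ, σ x ∂m) + Fintype.card Λ * (k ⬝ᵥ k) / 2) := by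
  have hc : Continuous fun σ : Λ → ℝ => k ⬝ᵥ σ := by
    simp only [dotProduct]; fun_prop
  have h := integral_exp_le_hoeffding (m := m) (Y := fun σ => k ⬝ᵥ σ) (b := ∑ x, |k x|)
    hc.aemeasurable (by
      filter_upwards [hm] with σ hσ
      refine Set.mem_Icc.2 (abs_le.1 ?_)
      refine (Finset.abs_sum_le_sum_abs _ _).trans (Finset.sum_le_sum fun x _ => ?_)
      rw [abs_mul]
      have : |σ x| ≤ 1 := abs_le.2 ⟨hσ.1 x, hσ.2 x⟩
      nlinarith [abs_nonneg (k x)])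
  rw [integral_dotProduct hm] at h
  refine h.trans (Real.exp_le_exp.2 ?_)
  have hcs : (∑ x, |k x|) ^ 2 ≤ Fintype.card Λ * (k ⬝ᵥ k) := by
    have := sq_sum_le_card_mul_sum_sq (s := Finset.univ) (f := fun x => |k x|)
    simpa [dotProduct, pow_two] using this
  linarith

lemma continuous_dotProduct_left (h : Λ → ℝ) : Continuous fun σ : Λ → ℝ => h ⬝ᵥ σ := by
  simp only [dotProduct]; fun_prop

lemma isProbabilityMeasure_tilted_cube {m : Measure (Λ → ℝ)} [IsProbabilityMeasure m]
    (hm : ∀ᵐ σ ∂m, σ ∈ Set.Icc (-1 : Λ → ℝ) 1) {f : (Λ → ℝ) → ℝ} (hf : Continuous f) :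
    IsProbabilityMeasure (m.tilted f) :=
  isProbabilityMeasure_tilted (integrable_cube hm (Real.continuous_exp.comp hf))

/-- Entropy–transport (Pinsker type) bound for a product measure `P` on the cube: the squared
displacement of the mean under the density `g / ∫ g` is at most twice the relative entropy. -/
lemma sq_mean_shift_le {β : Λ → Measure ℝ} [∀ x, IsProbabilityMeasure (β x)]
    (hβ : ∀ x, ∀ᵐ a ∂(β x), a ∈ Set.Icc (-1 : ℝ) 1)
    {g : (Λ → ℝ) → ℝ} (hg : Continuous g) (hpos : ∀ σ, 0 < g σ) (D : Λ → ℝ)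
    (hD : ∀ x, D x = (∫ σ, σ x * g σ ∂(Measure.pi β)) / (∫ σ, g σ ∂(Measure.pi β))
      - ∫ σ, σ x ∂(Measure.pi β)) :
    D ⬝ᵥ D ≤ 2 * ent (Measure.pi β) g / ∫ σ, g σ ∂(Measure.pi β) := by
  have hm := pi_ae_mem_cube hβ
  have hInt : ∀ f : (Λ → ℝ) → ℝ, Continuous f → Integrable f (Measure.pi β) :=
    fun f hf => integrable_cube hm hf
  have hG := integral_pos_of_pos (hInt g hg) hpos
  have hc := continuous_dotProduct_left D
  have h1 := integral_mul_le_ent (m := Measure.pi β) (g := g) (ψ := fun σ => D ⬝ᵥ σ) hpos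
    (hInt _ hg) (hInt _ (hg.mul (hg.log fun σ => (hpos σ).ne'))) (hInt _ (hg.mul hc))
    (hInt _ (Real.continuous_exp.comp hc))
  have h2 : Real.log (∫ σ, Real.exp (D ⬝ᵥ σ) ∂(Measure.pi β))
      ≤ D ⬝ᵥ (fun x => ∫ σ, σ x ∂(Measure.pi β)) + D ⬝ᵥ D / 2 := by
    have h0 : 0 < ∫ σ, Real.exp (D ⬝ᵥ σ) ∂(Measure.pi β) :=
      integral_pos_of_pos (hInt _ (Real.continuous_exp.comp hc)) fun σ => Real.exp_pos _
    rw [Real.log_le_iff_le_exp h0]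
    exact integral_exp_dotProduct_pi_le hβ D
  have h3 : ∫ σ, g σ * (D ⬝ᵥ σ) ∂(Measure.pi β)
      = (∫ σ, g σ ∂(Measure.pi β)) * (D ⬝ᵥ D + D ⬝ᵥ (fun x => ∫ σ, σ x ∂(Measure.pi β))) := by
    have e : ∀ σ, g σ * (D ⬝ᵥ σ) = ∑ x, D x * (σ x * g σ) := by
      intro σ
      simp only [dotProduct, Finset.mul_sum]
      exact Finset.sum_congr rfl fun x _ => by ring
    simp only [e]
    rw [integral_finsetSum _ fun x _ => hInt _ (by fun_prop)]
    simp only [integral_const_mul, dotProduct, ← Finset.sum_add_distrib, Finset.mul_sum]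
    refine Finset.sum_congr rfl fun x _ => ?_
    conv_rhs => rw [← mul_add]
    have := hD x
    have e2 : D x + ∫ σ, σ x ∂(Measure.pi β)
      = (∫ σ, σ x * g σ ∂(Measure.pi β)) / (∫ σ, g σ ∂(Measure.pi β)) := by linarith
    rw [e2]
    field_simp
  rw [h3] at h1
  have h4 := mul_le_mul_of_nonneg_left h2 hG.le
  rw [le_div_iff₀ hG]
  nlinarith

end Tilts

/-! ### Entropy under a uniformly log-concave measure -/

section BobkovLedoux

variable {Λ : Type*} [Fintype Λ]

lemma dotProduct_sub_mul_le {e : ℝ} (he : 0 < e) (d D : Λ → ℝ) :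
    d ⬝ᵥ D - e / 2 * (d ⬝ᵥ d) ≤ 1 / (2 * e) * (D ⬝ᵥ D) := by
  have h : ∀ x, d x * D x - e / 2 * (d x * d x) ≤ 1 / (2 * e) * (D x * D x) := by
    intro x
    have h0 : 1 / (2 * e) * (D x * D x) - (d x * D x - e / 2 * (d x * d x))
        = 1 / (2 * e) * (D x - e * d x) ^ 2 := by
      field_simp; ring
    have : 0 ≤ 1 / (2 * e) * (D x - e * d x) ^ 2 := by positivity
    linarith
  simp only [dotProduct, Finset.mul_sum, ← Finset.sum_sub_distrib]
  exact Finset.sum_le_sum fun x _ => h x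

variable [DecidableEq Λ]

/-- The Prékopa–Leindler step: for small `s`, an `L^{1/(1-s)}` norm of `G` is controlled by an
exponential moment of the squared logarithmic slope bound `R`. -/
lemma lintegral_rpow_le {φ : (Λ → ℝ) → ℝ} (hφm : Measurable φ) {l : ℝ}
    (hφ : ∀ t s : ℝ, 0 < t → 0 < s → t + s = 1 → ∀ x y : Λ → ℝ,
      t * φ x + s * φ y ≤ φ (t • x + s • y) - l * t * s * ((x - y) ⬝ᵥ (x - y)) / 2)
    {ϱ : Measure (Λ → ℝ)} [IsProbabilityMeasure ϱ]
    (hϱ : ϱ = volume.withDensity fun h => ENNReal.ofReal (Real.exp (φ h)))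
    {G R : (Λ → ℝ) → ℝ} (hGm : Measurable G) (hRm : Measurable R)
    (hGpos : ∀ h, 0 < G h) {n : ℝ}
    (hG : ∀ h, ∃ D : Λ → ℝ, D ⬝ᵥ D ≤ R h ∧
      ∀ k, G (h + k) ≤ G h * Real.exp (k ⬝ᵥ D + n * (k ⬝ᵥ k) / 2))
    {t s : ℝ} (ht : 0 < t) (hs : 0 < s) (hts : t + s = 1) (he : 0 < l * t - n * s) :
    (∫⁻ h, ENNReal.ofReal (Real.exp (1 / t * Real.log (G h))) ∂ϱ) ^ t
      ≤ ∫⁻ h, ENNReal.ofReal (G h * Real.exp (s * (1 / (2 * (l * t - n * s))) * R h)) ∂ϱ := by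
  set e := l * t - n * s with hedef
  have hpm : Measurable fun h => ENNReal.ofReal (Real.exp (φ h)) := by fun_prop
  have hum : Measurable fun h => ENNReal.ofReal (Real.exp (1 / t * Real.log (G h))) := by fun_prop
  have hwm : Measurable fun h => ENNReal.ofReal (G h * Real.exp (s * (1 / (2 * e)) * R h)) := by
    fun_prop
  have key := prekopa_leindler ht hs hts (hpm.mul hum) hpm (hpm.mul hwm) (by
    intro x y
    simp only [Pi.mul_apply]
    obtain ⟨D, hD, hk⟩ := hG (t • x + s • y)
    have hx : t • x + s • y + s • (x - y) = x := by
      have : t = 1 - s := by linarith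
      rw [this]; ext i; simp; ring
    have h1 := hk (s • (x - y))
    rw [hx] at h1
    have h2 := hφ t s ht hs hts x y
    -- Strong concavity of `φ` absorbs the term linear in `x - y`, by completing the square.
    have h3 := dotProduct_sub_mul_le he (x - y) D
    set z := t • x + s • y
    set d := x - y
    have hs1 : (s • d) ⬝ᵥ D = s * (d ⬝ᵥ D) := by rw [smul_dotProduct, smul_eq_mul]
    have hs2 : (s • d) ⬝ᵥ (s • d) = s * (s * (d ⬝ᵥ d)) := by
      rw [smul_dotProduct, dotProduct_smul, smul_eq_mul, smul_eq_mul]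
    rw [hs1, hs2] at h1
    rw [← ENNReal.ofReal_mul (Real.exp_pos _).le, ← ENNReal.ofReal_mul (Real.exp_pos _).le,
      ENNReal.ofReal_rpow_of_pos (by positivity), ENNReal.ofReal_rpow_of_pos (by positivity),
      ← ENNReal.ofReal_mul (by positivity), ← Real.exp_add, ← Real.exp_mul, ← Real.exp_mul,
      ← Real.exp_add]
    apply ENNReal.ofReal_le_ofReal
    have e1 : (φ x + 1 / t * Real.log (G x)) * t + φ y * s
        = (t * φ x + s * φ y) + Real.log (G x) := by field_simp; ring
    rw [e1, Real.exp_add, Real.exp_log (hGpos x)]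
    calc Real.exp (t * φ x + s * φ y) * G x
        ≤ Real.exp (t * φ x + s * φ y)
            * (G z * Real.exp (s * (d ⬝ᵥ D) + n * (s * (s * (d ⬝ᵥ d))) / 2)) := by gcongr
      _ = G z * Real.exp (t * φ x + s * φ y
            + (s * (d ⬝ᵥ D) + n * (s * (s * (d ⬝ᵥ d))) / 2)) := by
          rw [Real.exp_add (t * φ x + s * φ y)]; ring
      _ ≤ G z * Real.exp (φ z + s * (1 / (2 * e)) * R z) := by
          refine mul_le_mul_of_nonneg_left (Real.exp_le_exp.2 ?_) (hGpos z).le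
          have h4 : s * (1 / (2 * e) * (D ⬝ᵥ D)) ≤ s * (1 / (2 * e) * R z) := by gcongr
          have h5 := mul_le_mul_of_nonneg_left h3 hs.le
          have h6 : s * (d ⬝ᵥ D - e / 2 * (d ⬝ᵥ d)) = s * (d ⬝ᵥ D)
            + n * (s * (s * (d ⬝ᵥ d))) / 2 - l * t * s * (d ⬝ᵥ d) / 2 := by
            rw [hedef]; ring
          linarith
      _ = Real.exp (φ z) * (G z * Real.exp (s * (1 / (2 * e)) * R z)) := by
          rw [Real.exp_add]; ring)
  have h1 : ∫⁻ h, ENNReal.ofReal (Real.exp (φ h)) = 1 := by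
    have := measure_univ (μ := ϱ)
    rwa [hϱ, withDensity_apply _ MeasurableSet.univ, setLIntegral_univ] at this
  rw [h1, ENNReal.one_rpow, mul_one] at key
  rw [hϱ, lintegral_withDensity_eq_lintegral_mul _ hpm hum,
    lintegral_withDensity_eq_lintegral_mul _ hpm hwm]
  exact key

lemma exp_sub_one_le {x : ℝ} (h0 : 0 ≤ x) (h1 : x ≤ 1) : Real.exp x - 1 ≤ x + x ^ 2 := by
  have := Real.abs_exp_sub_one_sub_id_le (x := x) (abs_le.2 ⟨by linarith, h1⟩)
  have := (abs_le.1 this).2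
  linarith

/-- The Bobkov–Ledoux form of the logarithmic Sobolev inequality for a uniformly log-concave
measure `ϱ`: the gradient of `log G` enters only through the one-sided second-order bound `hG`,
so that no differentiability of `G` is required. -/
theorem ent_le_of_uniformly_logConcave {φ : (Λ → ℝ) → ℝ} (hφm : Measurable φ) {l : ℝ} (hl : 0 < l)
    (hφ : ∀ t s : ℝ, 0 < t → 0 < s → t + s = 1 → ∀ x y : Λ → ℝ,
      t * φ x + s * φ y ≤ φ (t • x + s • y) - l * t * s * ((x - y) ⬝ᵥ (x - y)) / 2)
    {ϱ : Measure (Λ → ℝ)} [IsProbabilityMeasure ϱ]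
    (hϱ : ϱ = volume.withDensity fun h => ENNReal.ofReal (Real.exp (φ h)))
    {G R : (Λ → ℝ) → ℝ} (hGm : Measurable G) (hRm : Measurable R)
    {a b R0 : ℝ} (ha : 0 < a) (haG : ∀ h, a ≤ G h) (hGb : ∀ h, G h ≤ b)
    (hR0 : ∀ h, R h ≤ R0) {n : ℝ}
    (hG : ∀ h, ∃ D : Λ → ℝ, D ⬝ᵥ D ≤ R h ∧
      ∀ k, G (h + k) ≤ G h * Real.exp (k ⬝ᵥ D + n * (k ⬝ᵥ k) / 2)) :
    ent ϱ G ≤ 1 / (2 * l) * ∫ h, G h * R h ∂ϱ := by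
  have hGpos : ∀ h, 0 < G h := fun h => ha.trans_le (haG h)
  have hR : ∀ h, 0 ≤ R h := fun h => by
    obtain ⟨D, hD, -⟩ := hG h
    exact (Finset.sum_nonneg fun i _ => mul_self_nonneg (D i)).trans hD
  have hb : 0 < b := (hGpos 0).trans_le (hGb 0)
  have hR0' : 0 ≤ R0 := (hR 0).trans (hR0 0)
  have hInt : ∀ {f : (Λ → ℝ) → ℝ} (C : ℝ), Measurable f → (∀ h, |f h| ≤ C) → Integrable f ϱ :=
    fun C hf hC => Integrable.of_bound hf.aestronglyMeasurable C (.of_forall hC)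
  have hlogb : ∀ h, |Real.log (G h)| ≤ |Real.log a| + |Real.log b| := fun h => by
    have h1 := Real.log_le_log ha (haG h)
    have h2 := Real.log_le_log (hGpos h) (hGb h)
    refine abs_le.2 ⟨?_, ?_⟩
    · linarith [neg_abs_le (Real.log a), abs_nonneg (Real.log b)]
    · linarith [le_abs_self (Real.log b), abs_nonneg (Real.log a)]
  have hGi : Integrable G ϱ := hInt b hGm fun h => by rw [abs_of_pos (hGpos h)]; exact hGb h
  have hGRi : Integrable (fun h => G h * R h) ϱ := hInt (b * R0) (hGm.mul hRm) fun h => by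
    rw [abs_of_nonneg (mul_nonneg (hGpos h).le (hR h))]
    exact mul_le_mul (hGb h) (hR0 h) (hR h) hb.le
  have hGli : Integrable (fun h => G h * Real.log (G h)) ϱ :=
    hInt (b * (|Real.log a| + |Real.log b|)) (by fun_prop) fun h => by
      rw [abs_mul, abs_of_pos (hGpos h)]
      exact mul_le_mul (hGb h) (hlogb h) (abs_nonneg _) hb.le
  have hτ := integral_pos_of_pos hGi hGpos
  let κ : ℝ → ℝ := fun s => 1 / (2 * (l * (1 - s) - n * s))
  have hstep : ∀ s : ℝ, 0 < s → s < 1 → 0 < l * (1 - s) - n * s → s * κ s * R0 ≤ 1 →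
      ent ϱ G ≤ κ s * (∫ h, G h * R h ∂ϱ) + s * (κ s) ^ 2 * (b * R0 ^ 2) := by
    intro s hs hs1 he hκR
    have ht : 0 < 1 - s := by linarith
    have hκ : 0 < κ s := by simp only [κ]; positivity
    have hsκR : ∀ h, 0 ≤ s * κ s * R h ∧ s * κ s * R h ≤ 1 := fun h =>
      ⟨by have := hR h; positivity,
        (mul_le_mul_of_nonneg_left (hR0 h) (by positivity)).trans hκR⟩
    -- Prékopa–Leindler bounds the `L^{1/(1-s)}` norm of `G`; the Gibbs inequality with
    -- `ψ = log G / (1 - s)` bounds that norm from below by `s` times the entropy. Dividing by `s`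
    -- gives the claim up to an error of order `s`.
    have hPL := lintegral_rpow_le hφm hφ hϱ hGm hRm hGpos hG ht hs (by ring) he
    change _ ≤ ∫⁻ h, ENNReal.ofReal (G h * Real.exp (s * κ s * R h)) ∂ϱ at hPL
    have hIi : Integrable (fun h => Real.exp (1 / (1 - s) * Real.log (G h))) ϱ :=
      hInt (Real.exp (1 / (1 - s) * Real.log b)) (by fun_prop) fun h => by
        rw [abs_of_pos (Real.exp_pos _)]
        have := Real.log_le_log (hGpos h) (hGb h)
        gcongr
    have hYi : Integrable (fun h => G h * Real.exp (s * κ s * R h)) ϱ :=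
      hInt (b * Real.exp 1) (by fun_prop) fun h => by
        rw [abs_of_pos (mul_pos (hGpos h) (Real.exp_pos _))]
        exact mul_le_mul (hGb h) (Real.exp_le_exp.2 (hsκR h).2) (Real.exp_pos _).le hb.le
    have hIpos := integral_pos_of_pos hIi fun h => Real.exp_pos _
    have hYpos := integral_pos_of_pos hYi fun h => mul_pos (hGpos h) (Real.exp_pos _)
    rw [← ofReal_integral_eq_lintegral_ofReal hIi (.of_forall fun h => (Real.exp_pos _).le),
      ← ofReal_integral_eq_lintegral_ofReal hYi
        (.of_forall fun h => (mul_pos (hGpos h) (Real.exp_pos _)).le),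
      ENNReal.ofReal_rpow_of_pos hIpos, ENNReal.ofReal_le_ofReal_iff hYpos.le] at hPL
    have hGibbs := integral_mul_le_ent (m := ϱ) (ψ := fun h => 1 / (1 - s) * Real.log (G h))
      hGpos hGi hGli (by
        have := hGli.const_mul (1 / (1 - s))
        refine this.congr (.of_forall fun h => ?_)
        simp only; ring) hIi
    have hlog := Real.log_le_log (Real.rpow_pos_of_pos hIpos _) hPL
    rw [Real.log_rpow hIpos] at hlog
    have hL : ∫ h, G h * (1 / (1 - s) * Real.log (G h)) ∂ϱ
        = 1 / (1 - s) * ∫ h, G h * Real.log (G h) ∂ϱ := by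
      rw [← integral_const_mul]
      congr 1; ext h; ring
    rw [hL] at hGibbs
    have hYτ := mul_log_add_sub_le hτ hYpos
    have hYle : (∫ h, G h * Real.exp (s * κ s * R h) ∂ϱ) - ∫ h, G h ∂ϱ
        ≤ s * κ s * (∫ h, G h * R h ∂ϱ) + s * (s * (κ s) ^ 2 * (b * R0 ^ 2)) := by
      rw [← integral_sub hYi hGi]
      have h1 : ∫ h, (G h * Real.exp (s * κ s * R h) - G h) ∂ϱ
          ≤ ∫ h, (s * κ s * (G h * R h) + s * (s * (κ s) ^ 2 * (b * R0 ^ 2))) ∂ϱ := by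
        refine integral_mono (hYi.sub hGi) ((hGRi.const_mul _).add (integrable_const _)) ?_
        intro h
        simp only
        have h2 := exp_sub_one_le (hsκR h).1 (hsκR h).2
        have h3 := mul_le_mul_of_nonneg_left h2 (hGpos h).le
        have h4 : G h * (s * κ s * R h) ^ 2 ≤ b * (s * κ s * R0) ^ 2 := by
          have := hGb h; have := hR h; have := hR0 h; have := (hsκR h).1
          gcongr
        nlinarith
      refine h1.trans (le_of_eq ?_)
      rw [integral_add (hGRi.const_mul _) (integrable_const _), integral_const_mul]
      simp
    unfold ent at hGibbs ⊢
    set L := ∫ h, G h * Real.log (G h) ∂ϱ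
    set τ := ∫ h, G h ∂ϱ
    set Y := ∫ h, G h * Real.exp (s * κ s * R h) ∂ϱ
    set I := ∫ h, Real.exp (1 / (1 - s) * Real.log (G h)) ∂ϱ
    have h5 := mul_le_mul_of_nonneg_left hGibbs ht.le
    have h6 : (1 - s) * (1 / (1 - s) * L) = L := by field_simp
    rw [h6] at h5
    have h7 := mul_le_mul_of_nonneg_left hlog hτ.le
    have h8 : s * (L - τ * Real.log τ)
        ≤ s * (κ s * (∫ h, G h * R h ∂ϱ) + s * (κ s) ^ 2 * (b * R0 ^ 2)) := by
      nlinarith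
    exact le_of_mul_le_mul_left h8 hs
  -- Let `s` decrease to `0`.
  have hκ0 : κ 0 = 1 / (2 * l) := by simp [κ]
  have hκc : ContinuousAt κ 0 := by
    refine ContinuousAt.div continuousAt_const (by fun_prop) ?_
    simp [hl.ne']
  have hlim : Filter.Tendsto
      (fun s => κ s * (∫ h, G h * R h ∂ϱ) + s * (κ s) ^ 2 * (b * R0 ^ 2))
      (nhdsWithin 0 (Set.Ioi 0)) (nhds (1 / (2 * l) * ∫ h, G h * R h ∂ϱ)) := by
    have hc : ContinuousAt
        (fun s => κ s * (∫ h, G h * R h ∂ϱ) + s * (κ s) ^ 2 * (b * R0 ^ 2)) 0 := by fun_prop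
    have := hc.tendsto
    simp only [hκ0, zero_mul, add_zero] at this
    exact this.mono_left nhdsWithin_le_nhds
  refine ge_of_tendsto hlim ?_
  have e1 : ∀ᶠ s : ℝ in nhds 0, s < 1 := eventually_lt_nhds one_pos
  have e2 : ∀ᶠ s : ℝ in nhds 0, 0 < l * (1 - s) - n * s := by
    have hc : ContinuousAt (fun s : ℝ => l * (1 - s) - n * s) 0 := by fun_prop
    exact hc.eventually (lt_mem_nhds (by simpa using hl))
  have e3 : ∀ᶠ s : ℝ in nhds 0, s * κ s * R0 < 1 := by
    have hc : ContinuousAt (fun s : ℝ => s * κ s * R0) 0 := by fun_prop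
    exact hc.eventually (gt_mem_nhds (by simp))
  filter_upwards [self_mem_nhdsWithin, nhdsWithin_le_nhds e1, nhdsWithin_le_nhds e2,
    nhdsWithin_le_nhds e3] with s h1 h2 h3 h4
  exact hstep s h1 h2 h3 h4.le

end BobkovLedoux

/-! ### Decomposition over a random external field -/

lemma isProbabilityMeasure_site_tilted {I : Type*} {β : I → Measure ℝ}
    [∀ x, IsProbabilityMeasure (β x)] (hβ : ∀ x, ∀ᵐ a ∂(β x), a ∈ Set.Icc (-1 : ℝ) 1)
    (h : I → ℝ) (x : I) : IsProbabilityMeasure ((β x).tilted fun a => h x * a) :=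
  isProbabilityMeasure_tilted
    (integrable_of_ae_mem_compact isCompact_Icc (hβ x) (by fun_prop))

section Field

variable {Λ : Type*} [Fintype Λ]

/-- The product measure with single-site factors `β x`, tilted by the external field `h`. -/
noncomputable def fieldMeasure (β : Λ → Measure ℝ) (h : Λ → ℝ) : Measure (Λ → ℝ) :=
  (Measure.pi β).tilted fun σ => h ⬝ᵥ σ

/-- The partition function of `fieldMeasure β h`, the Laplace transform of the product measure. -/
noncomputable def fieldZ (β : Λ → Measure ℝ) (h : Λ → ℝ) : ℝ :=
  ∫ σ, Real.exp (h ⬝ᵥ σ) ∂(Measure.pi β)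

lemma integral_fieldMeasure (β : Λ → Measure ℝ) (h : Λ → ℝ) (f : (Λ → ℝ) → ℝ) :
    ∫ σ, f σ ∂(fieldMeasure β h)
      = (∫ σ, f σ * Real.exp (h ⬝ᵥ σ) ∂(Measure.pi β)) / fieldZ β h :=
  integral_tilted_eq_div _ _ _

variable {β : Λ → Measure ℝ} [∀ x, IsProbabilityMeasure (β x)]

lemma fieldMeasure_eq_pi (h : Λ → ℝ) :
    fieldMeasure β h = Measure.pi fun x => (β x).tilted fun a => h x * a := by
  rw [pi_tilted]
  rfl

lemma isProbabilityMeasure_fieldMeasure (hβ : ∀ x, ∀ᵐ a ∂(β x), a ∈ Set.Icc (-1 : ℝ) 1)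
    (h : Λ → ℝ) : IsProbabilityMeasure (fieldMeasure β h) :=
  isProbabilityMeasure_tilted_cube (pi_ae_mem_cube hβ) (continuous_dotProduct_left h)

lemma fieldMeasure_ae_mem_cube (hβ : ∀ x, ∀ᵐ a ∂(β x), a ∈ Set.Icc (-1 : ℝ) 1) (h : Λ → ℝ) :
    ∀ᵐ σ ∂(fieldMeasure β h), σ ∈ Set.Icc (-1 : Λ → ℝ) 1 :=
  ae_mem_cube_tilted (pi_ae_mem_cube hβ) _

lemma fieldZ_pos (hβ : ∀ x, ∀ᵐ a ∂(β x), a ∈ Set.Icc (-1 : ℝ) 1) (h : Λ → ℝ) :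
    0 < fieldZ β h := by
  refine integral_pos_of_pos (integrable_cube (pi_ae_mem_cube hβ) ?_) fun σ => Real.exp_pos _
  exact Real.continuous_exp.comp (continuous_dotProduct_left h)

lemma fieldZ_add (hβ : ∀ x, ∀ᵐ a ∂(β x), a ∈ Set.Icc (-1 : ℝ) 1) (h k : Λ → ℝ) :
    fieldZ β (h + k) = fieldZ β h * ∫ σ, Real.exp (k ⬝ᵥ σ) ∂(fieldMeasure β h) := by
  have hZ := fieldZ_pos hβ h
  unfold fieldMeasure
  rw [integral_exp_tilted]
  simp only [Pi.add_apply, ← add_dotProduct]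
  change fieldZ β (h + k) = fieldZ β h * (fieldZ β (h + k) / fieldZ β h)
  field_simp

lemma fieldMeasure_add (hβ : ∀ x, ∀ᵐ a ∂(β x), a ∈ Set.Icc (-1 : ℝ) 1) (h k : Λ → ℝ) :
    fieldMeasure β (h + k) = (fieldMeasure β h).tilted fun σ => k ⬝ᵥ σ := by
  unfold fieldMeasure
  rw [tilted_tilted (integrable_cube (pi_ae_mem_cube hβ)
    (Real.continuous_exp.comp (continuous_dotProduct_left h)))]
  congr 1
  ext σ
  simp [add_dotProduct]

lemma continuous_integral_mul_exp (hβ : ∀ x, ∀ᵐ a ∂(β x), a ∈ Set.Icc (-1 : ℝ) 1)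
    {f : (Λ → ℝ) → ℝ} (hf : Continuous f) :
    Continuous fun h : Λ → ℝ => ∫ σ, f σ * Real.exp (h ⬝ᵥ σ) ∂(Measure.pi β) := by
  have h : (Measure.pi β).restrict (Set.Icc (-1 : Λ → ℝ) 1) = Measure.pi β :=
    Measure.restrict_eq_self_of_ae_mem (pi_ae_mem_cube hβ)
  rw [← h]
  refine continuous_parametric_integral_of_continuous ?_ isCompact_Icc
  simp only [Function.uncurry_def, dotProduct]
  fun_prop

lemma continuous_fieldZ (hβ : ∀ x, ∀ᵐ a ∂(β x), a ∈ Set.Icc (-1 : ℝ) 1) :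
    Continuous (fieldZ β) := by
  have := continuous_integral_mul_exp hβ (f := fun _ => 1) continuous_const
  simp only [one_mul] at this
  exact this

lemma continuous_integral_fieldMeasure (hβ : ∀ x, ∀ᵐ a ∂(β x), a ∈ Set.Icc (-1 : ℝ) 1)
    {f : (Λ → ℝ) → ℝ} (hf : Continuous f) :
    Continuous fun h : Λ → ℝ => ∫ σ, f σ ∂(fieldMeasure β h) := by
  simp only [integral_fieldMeasure]
  exact (continuous_integral_mul_exp hβ hf).div (continuous_fieldZ hβ)
    fun h => (fieldZ_pos hβ h).ne'

/-- The product structure bounds the covariance of `fieldMeasure` by the identity, so that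
`log (fieldZ β h) - |h|² / 2` is concave in `h`. -/
lemma log_fieldZ_combo_le (hβ : ∀ x, ∀ᵐ a ∂(β x), a ∈ Set.Icc (-1 : ℝ) 1)
    {t s : ℝ} (ht : 0 < t) (hs : 0 < s) (hts : t + s = 1) (x y : Λ → ℝ) :
    t * Real.log (fieldZ β x) + s * Real.log (fieldZ β y)
      ≤ Real.log (fieldZ β (t • x + s • y)) + t * s * ((x - y) ⬝ᵥ (x - y)) / 2 := by
  set z := t • x + s • y with hz
  set d := x - y with hd
  have ht' : t = 1 - s := by linarith
  have hx : x = z + s • d := by rw [hz, hd, ht']; ext i; simp; ring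
  have hy : y = z + (-t) • d := by rw [hz, hd, ht']; ext i; simp; ring
  set m : Λ → ℝ := fun i => ∫ σ, σ i ∂(fieldMeasure β z) with hm
  have key : ∀ k : ℝ, Real.log (fieldZ β (z + k • d))
      ≤ Real.log (fieldZ β z) + k * (d ⬝ᵥ m) + k * (k * (d ⬝ᵥ d)) / 2 := by
    intro k
    rw [fieldZ_add hβ]
    have hprob := isProbabilityMeasure_fieldMeasure hβ z
    have hI : 0 < ∫ σ, Real.exp ((k • d) ⬝ᵥ σ) ∂(fieldMeasure β z) :=
      integral_pos_of_pos (integrable_cube (fieldMeasure_ae_mem_cube hβ z)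
        (Real.continuous_exp.comp (continuous_dotProduct_left _))) fun σ => Real.exp_pos _
    rw [Real.log_mul (fieldZ_pos hβ z).ne' hI.ne', add_assoc]
    gcongr
    rw [Real.log_le_iff_le_exp hI]
    have hsite := isProbabilityMeasure_site_tilted hβ z
    have h1 := integral_exp_dotProduct_pi_le (β := fun x => (β x).tilted fun a => z x * a)
      (fun x => (tilted_absolutelyContinuous _ _).ae_le (hβ x)) (k • d)
    rw [← fieldMeasure_eq_pi] at h1
    refine h1.trans (le_of_eq ?_)
    congr 1
    simp only [smul_dotProduct, dotProduct_smul, smul_eq_mul, hm]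
  have h1 := mul_le_mul_of_nonneg_left (key s) ht.le
  have h2 := mul_le_mul_of_nonneg_left (key (-t)) hs.le
  rw [← hx] at h1
  rw [← hy] at h2
  have e : t * (Real.log (fieldZ β z) + s * (d ⬝ᵥ m) + s * (s * (d ⬝ᵥ d)) / 2)
      + s * (Real.log (fieldZ β z) + -t * (d ⬝ᵥ m) + -t * (-t * (d ⬝ᵥ d)) / 2)
      = Real.log (fieldZ β z) + t * s * (d ⬝ᵥ d) / 2 := by
    rw [ht']; ring
  linarith

/-- The exponential growth of the mean of `g` under a tilt `k`, to second order in `k`; the linear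
term is the displacement of the mean under the density `g`. -/
lemma integral_tilted_le {m : Measure (Λ → ℝ)} [IsProbabilityMeasure m]
    (hm : ∀ᵐ σ ∂m, σ ∈ Set.Icc (-1 : Λ → ℝ) 1)
    {g : (Λ → ℝ) → ℝ} (hg : Continuous g) (hpos : ∀ σ, 0 < g σ) (D : Λ → ℝ)
    (hD : ∀ x, D x = (∫ σ, σ x * g σ ∂m) / (∫ σ, g σ ∂m) - ∫ σ, σ x ∂m) (k : Λ → ℝ) :
    ∫ σ, g σ ∂(m.tilted fun σ => k ⬝ᵥ σ)
      ≤ (∫ σ, g σ ∂m) * Real.exp (k ⬝ᵥ D + Fintype.card Λ * (k ⬝ᵥ k) / 2) := by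
  have hlog : Continuous fun σ => Real.log (g σ) := hg.log fun σ => (hpos σ).ne'
  have hk := continuous_dotProduct_left k
  have hG := integral_pos_of_pos (integrable_cube hm hg) hpos
  have hprob : IsProbabilityMeasure (m.tilted fun σ => Real.log (g σ)) :=
    isProbabilityMeasure_tilted_cube hm hlog
  have eg : ∀ σ, Real.exp (Real.log (g σ)) = g σ := fun σ => Real.exp_log (hpos σ)
  -- The sub-Gaussian bound is applied to the probability measure `g m / ∫ g dm`, written as a tilt
  -- of `m` by `log g`; Jensen bounds the normalization of the tilt by `k` from below.
  have h1 := integral_exp_dotProduct_le (ae_mem_cube_tilted hm fun σ => Real.log (g σ)) k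
  rw [integral_exp_tilted] at h1
  simp only [Pi.add_apply, Real.exp_add, eg, integral_tilted, smul_eq_mul] at h1
  rw [div_le_iff₀ hG, ← Real.exp_add] at h1
  have hI : 0 < ∫ σ, Real.exp (k ⬝ᵥ σ) ∂m :=
    integral_pos_of_pos (integrable_cube hm (Real.continuous_exp.comp hk)) fun σ => Real.exp_pos _
  have h2 := exp_le_integral_exp (integrable_cube hm hk)
    (integrable_cube hm (Real.continuous_exp.comp hk))
  rw [integral_dotProduct hm] at h2
  rw [integral_tilted_eq_div, div_le_iff₀ hI]
  refine h1.trans ?_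
  have hDk : k ⬝ᵥ (fun x => ∫ σ, g σ / (∫ σ, g σ ∂m) * σ x ∂m)
      = k ⬝ᵥ D + k ⬝ᵥ (fun x => ∫ σ, σ x ∂m) := by
    rw [← dotProduct_add]
    congr 1
    ext x
    rw [Pi.add_apply, hD x, sub_add_cancel, ← integral_div]
    congr 1
    ext σ
    ring
  rw [hDk]
  have h4 : Real.exp (k ⬝ᵥ D + k ⬝ᵥ (fun x => ∫ σ, σ x ∂m) + Fintype.card Λ * (k ⬝ᵥ k) / 2)
      = Real.exp (k ⬝ᵥ D + Fintype.card Λ * (k ⬝ᵥ k) / 2)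
        * Real.exp (k ⬝ᵥ (fun x => ∫ σ, σ x ∂m)) := by
    rw [← Real.exp_add]; congr 1; ring
  rw [h4, mul_comm, mul_assoc]
  gcongr

end Field

section Mixture

variable {Λ : Type*} [Fintype Λ]

/-- The Hubbard–Stratonovich kernel: its integral over the field `h` is proportional to
`exp (σ ⬝ᵥ A *ᵥ σ / 2)` when `B` is the inverse of `A`. -/
noncomputable def hsKernel (B : Matrix Λ Λ ℝ) (h σ : Λ → ℝ) : ℝ :=
  Real.exp (h ⬝ᵥ σ - 1 / 2 * (h ⬝ᵥ B *ᵥ h))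

lemma hsKernel_pos (B : Matrix Λ Λ ℝ) (h σ : Λ → ℝ) : 0 < hsKernel B h σ := Real.exp_pos _

lemma continuous_hsKernel (B : Matrix Λ Λ ℝ) :
    Continuous fun p : (Λ → ℝ) × (Λ → ℝ) => hsKernel B p.1 p.2 := by
  simp only [hsKernel, dotProduct, mulVec]
  fun_prop

/-- Gaussian domination in `h`, uniform over spins in the cube. -/
lemma hsKernel_le {B : Matrix Λ Λ ℝ} {c : ℝ} (hc : 0 < c)
    (hB : ∀ h : Λ → ℝ, 1 / c * (h ⬝ᵥ h) ≤ h ⬝ᵥ B *ᵥ h) (h : Λ → ℝ) {σ : Λ → ℝ}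
    (hσ : σ ∈ Set.Icc (-1 : Λ → ℝ) 1) :
    hsKernel B h σ ≤ ∏ x, Real.exp c * Real.exp (-(1 / (4 * c)) * h x ^ 2) := by
  simp only [← Real.exp_add, ← Real.exp_sum, hsKernel]
  refine Real.exp_le_exp.2 ?_
  have h1 : h ⬝ᵥ σ - 1 / 2 * (1 / c * (h ⬝ᵥ h)) ≤ ∑ x, (c + -(1 / (4 * c)) * h x ^ 2) := by
    simp only [dotProduct, Finset.mul_sum, ← Finset.sum_sub_distrib]
    refine Finset.sum_le_sum fun x _ => ?_
    have h2 : h x * σ x ≤ |h x| := by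
      have : |σ x| ≤ 1 := abs_le.2 ⟨hσ.1 x, hσ.2 x⟩
      calc h x * σ x ≤ |h x * σ x| := le_abs_self _
        _ = |h x| * |σ x| := abs_mul _ _
        _ ≤ |h x| * 1 := by gcongr
        _ = |h x| := mul_one _
    have h3 : c + -(1 / (4 * c)) * h x ^ 2 - (|h x| - 1 / 2 * (1 / c * (h x * h x)))
        = 1 / (4 * c) * (|h x| - 2 * c) ^ 2 := by
      rw [sub_sq, sq_abs]; field_simp; ring
    have h4 : 0 ≤ 1 / (4 * c) * (|h x| - 2 * c) ^ 2 := by positivity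
    linarith
  have := hB h
  linarith

lemma integrable_hsKernel {m : Measure (Λ → ℝ)} [IsFiniteMeasure m]
    (hm : ∀ᵐ σ ∂m, σ ∈ Set.Icc (-1 : Λ → ℝ) 1) {B : Matrix Λ Λ ℝ} {c : ℝ} (hc : 0 < c)
    (hB : ∀ h : Λ → ℝ, 1 / c * (h ⬝ᵥ h) ≤ h ⬝ᵥ B *ᵥ h)
    {f : (Λ → ℝ) → ℝ} (hf : Continuous f) :
    Integrable (fun p : (Λ → ℝ) × (Λ → ℝ) => f p.2 * hsKernel B p.1 p.2)
      ((volume : Measure (Λ → ℝ)).prod m) := by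
  have h1 : Integrable (fun h : Λ → ℝ => ∏ x, Real.exp c * Real.exp (-(1 / (4 * c)) * h x ^ 2))
      (volume : Measure (Λ → ℝ)) := by
    refine Integrable.fintype_prod (f := fun (_ : Λ) a =>
      Real.exp c * Real.exp (-(1 / (4 * c)) * a ^ 2)) fun x => ?_
    exact (integrable_exp_neg_mul_sq (by positivity)).const_mul _
  have h2 : Integrable (fun σ => |f σ|) m := integrable_cube hm hf.abs
  have h3 := h1.mul_prod h2
  refine h3.mono' ?_ ?_
  · exact ((hf.comp continuous_snd).mul (continuous_hsKernel B)).aestronglyMeasurable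
  · have hae : ∀ᵐ p ∂((volume : Measure (Λ → ℝ)).prod m), p.2 ∈ Set.Icc (-1 : Λ → ℝ) 1 :=
      Measure.quasiMeasurePreserving_snd.ae hm
    filter_upwards [hae] with p hp
    rw [Real.norm_eq_abs, abs_mul, abs_of_pos (hsKernel_pos _ _ _), mul_comm]
    exact mul_le_mul_of_nonneg_right (hsKernel_le hc hB _ hp) (abs_nonneg _)

/-- Completing the square in the Gaussian integral. -/
lemma integral_hsKernel [DecidableEq Λ] {A B : Matrix Λ Λ ℝ} (hBs : B.IsSymm) (hBA : B * A = 1)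
    (σ : Λ → ℝ) :
    ∫ h, hsKernel B h σ = (∫ k, hsKernel B k 0) * Real.exp (1 / 2 * (σ ⬝ᵥ A *ᵥ σ)) := by
  rw [← integral_add_right_eq_self _ (A *ᵥ σ), ← integral_mul_const]
  congr 1
  ext k
  simp only [hsKernel, ← Real.exp_add]
  congr 1
  have e1 : B *ᵥ (A *ᵥ σ) = σ := by rw [mulVec_mulVec, hBA, one_mulVec]
  have e2 : (A *ᵥ σ) ⬝ᵥ (B *ᵥ k) = σ ⬝ᵥ k := by
    rw [dotProduct_mulVec, ← mulVec_transpose, hBs.eq, e1]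
  rw [mulVec_add, e1, add_dotProduct, add_dotProduct, dotProduct_add, dotProduct_add, e2,
    dotProduct_zero, dotProduct_comm (A *ᵥ σ) σ, dotProduct_comm σ k]
  ring

variable {β : Λ → Measure ℝ} [∀ x, IsProbabilityMeasure (β x)]

/-- The logarithm of the unnormalized density of the random external field. -/
noncomputable def fieldLogDensity (β : Λ → Measure ℝ) (B : Matrix Λ Λ ℝ) (h : Λ → ℝ) : ℝ :=
  Real.log (fieldZ β h) - 1 / 2 * (h ⬝ᵥ B *ᵥ h)

/-- The joint law of field and spins, disintegrated over the field. -/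
lemma exp_fieldLogDensity_mul (hβ : ∀ x, ∀ᵐ a ∂(β x), a ∈ Set.Icc (-1 : ℝ) 1)
    (B : Matrix Λ Λ ℝ) (h : Λ → ℝ) (f : (Λ → ℝ) → ℝ) :
    Real.exp (fieldLogDensity β B h) * ∫ σ, f σ ∂(fieldMeasure β h)
      = ∫ σ, f σ * hsKernel B h σ ∂(Measure.pi β) := by
  have hZ := fieldZ_pos hβ h
  rw [integral_fieldMeasure]
  simp only [hsKernel, fieldLogDensity, sub_eq_add_neg, Real.exp_add, Real.exp_log hZ,
    ← mul_assoc, integral_mul_const]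
  field_simp

lemma exp_fieldLogDensity (hβ : ∀ x, ∀ᵐ a ∂(β x), a ∈ Set.Icc (-1 : ℝ) 1)
    (B : Matrix Λ Λ ℝ) (h : Λ → ℝ) :
    Real.exp (fieldLogDensity β B h) = ∫ σ, 1 * hsKernel B h σ ∂(Measure.pi β) := by
  have := isProbabilityMeasure_fieldMeasure hβ h
  have h1 := exp_fieldLogDensity_mul hβ B h (fun _ => 1)
  simpa using h1

lemma continuous_fieldLogDensity (hβ : ∀ x, ∀ᵐ a ∂(β x), a ∈ Set.Icc (-1 : ℝ) 1)
    (B : Matrix Λ Λ ℝ) : Continuous (fieldLogDensity β B) := by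
  refine ((continuous_fieldZ hβ).log fun h => (fieldZ_pos hβ h).ne').sub ?_
  simp only [dotProduct, mulVec]
  fun_prop

lemma integrable_exp_fieldLogDensity (hβ : ∀ x, ∀ᵐ a ∂(β x), a ∈ Set.Icc (-1 : ℝ) 1)
    {B : Matrix Λ Λ ℝ} {c : ℝ} (hc : 0 < c)
    (hB : ∀ h : Λ → ℝ, 1 / c * (h ⬝ᵥ h) ≤ h ⬝ᵥ B *ᵥ h) :
    Integrable fun h => Real.exp (fieldLogDensity β B h) := by
  simp only [exp_fieldLogDensity hβ]
  exact (integrable_hsKernel (pi_ae_mem_cube hβ) hc hB (f := fun _ => 1)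
    continuous_const).integral_prod_left

/-- The measure with quadratic interaction `A` is the mixture of the product measures
`fieldMeasure β h` over the random field `h`. -/
lemma integral_integral_fieldMeasure [DecidableEq Λ]
    (hβ : ∀ x, ∀ᵐ a ∂(β x), a ∈ Set.Icc (-1 : ℝ) 1)
    {A B : Matrix Λ Λ ℝ} {c : ℝ} (hc : 0 < c) (hBs : B.IsSymm) (hBA : B * A = 1)
    (hB : ∀ h : Λ → ℝ, 1 / c * (h ⬝ᵥ h) ≤ h ⬝ᵥ B *ᵥ h)
    {f : (Λ → ℝ) → ℝ} (hf : Continuous f) :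
    ∫ h, (∫ σ, f σ ∂(fieldMeasure β h)) ∂((volume : Measure (Λ → ℝ)).tilted (fieldLogDensity β B))
      = ∫ σ, f σ ∂((Measure.pi β).tilted fun σ => 1 / 2 * (σ ⬝ᵥ A *ᵥ σ)) := by
  have key : ∀ f : (Λ → ℝ) → ℝ, Continuous f →
      ∫ h, ∫ σ, f σ * hsKernel B h σ ∂(Measure.pi β)
        = (∫ k, hsKernel B k 0)
          * ∫ σ, f σ * Real.exp (1 / 2 * (σ ⬝ᵥ A *ᵥ σ)) ∂(Measure.pi β) := by
    intro f hf
    rw [integral_integral_swap (integrable_hsKernel (pi_ae_mem_cube hβ) hc hB hf),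
      ← integral_const_mul]
    congr 1
    ext σ
    rw [integral_const_mul, integral_hsKernel hBs hBA]
    ring
  have hW : ∫ h, Real.exp (fieldLogDensity β B h)
      = (∫ k, hsKernel B k 0) * ∫ σ, Real.exp (1 / 2 * (σ ⬝ᵥ A *ᵥ σ)) ∂(Measure.pi β) := by
    simp only [exp_fieldLogDensity hβ]
    rw [key (fun _ => 1) continuous_const]
    simp only [one_mul]
  have hWpos := integral_pos_of_pos (integrable_exp_fieldLogDensity hβ hc hB)
    fun h => Real.exp_pos _
  have hne : (∫ k, hsKernel B k 0) ≠ 0 := by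
    intro h0
    rw [hW, h0, zero_mul] at hWpos
    exact lt_irrefl _ hWpos
  rw [integral_tilted_eq_div, integral_tilted_eq_div]
  simp only [mul_comm _ (Real.exp (fieldLogDensity β B _)), exp_fieldLogDensity_mul hβ]
  rw [key f hf, hW, mul_div_mul_left _ _ hne]

lemma quadratic_combo {B : Matrix Λ Λ ℝ} {t s : ℝ} (hts : t + s = 1) (x y : Λ → ℝ) :
    t * (x ⬝ᵥ B *ᵥ x) + s * (y ⬝ᵥ B *ᵥ y)
      = (t • x + s • y) ⬝ᵥ B *ᵥ (t • x + s • y) + t * s * ((x - y) ⬝ᵥ B *ᵥ (x - y)) := by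
  have ht : t = 1 - s := by linarith
  simp only [mulVec_add, mulVec_smul, mulVec_sub, add_dotProduct, dotProduct_add, sub_dotProduct,
    dotProduct_sub, smul_dotProduct, dotProduct_smul, smul_eq_mul, ht]
  ring

/-- Uniform log-concavity of the law of the random field with constant `1 / c - 1`: the Gaussian
factor contributes `1 / c`, and the partition function loses at most `1`. -/
lemma fieldLogDensity_combo (hβ : ∀ x, ∀ᵐ a ∂(β x), a ∈ Set.Icc (-1 : ℝ) 1)
    {B : Matrix Λ Λ ℝ} {c : ℝ}
    (hB : ∀ h : Λ → ℝ, 1 / c * (h ⬝ᵥ h) ≤ h ⬝ᵥ B *ᵥ h)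
    {t s : ℝ} (ht : 0 < t) (hs : 0 < s) (hts : t + s = 1) (x y : Λ → ℝ) :
    t * fieldLogDensity β B x + s * fieldLogDensity β B y
      ≤ fieldLogDensity β B (t • x + s • y)
        - (1 / c - 1) * t * s * ((x - y) ⬝ᵥ (x - y)) / 2 := by
  unfold fieldLogDensity
  have h1 := log_fieldZ_combo_le hβ ht hs hts x y
  have h2 := quadratic_combo (B := B) hts x y
  have h3 := mul_le_mul_of_nonneg_left (hB (x - y)) (mul_pos ht hs).le
  nlinarith

end Mixture

section Factorization

variable {Λ : Type*} [Fintype Λ] [DecidableEq Λ]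
  {β : Λ → Measure ℝ} [∀ x, IsProbabilityMeasure (β x)]

lemma abs_mul_log_le {a b u : ℝ} (ha : 0 < a) (hau : a ≤ u) (hub : u ≤ b) :
    |u * Real.log u| ≤ b * (|Real.log a| + |Real.log b|) := by
  have hu : 0 < u := ha.trans_le hau
  rw [abs_mul, abs_of_pos hu]
  refine mul_le_mul hub ?_ (abs_nonneg _) (hu.le.trans hub)
  have h1 := Real.log_le_log ha hau
  have h2 := Real.log_le_log hu hub
  refine abs_le.2 ⟨?_, ?_⟩
  · linarith [neg_abs_le (Real.log a), abs_nonneg (Real.log b)]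
  · linarith [le_abs_self (Real.log b), abs_nonneg (Real.log a)]

/-- Removal of the interaction: a bound on the entropy, uniform over the product measures in an
external field, passes to the measure with quadratic interaction `A ≤ c < 1` at the cost of a
factor `1 / (1 - c)`. Here `B` is the inverse of `A`. -/
theorem ent_quadratic_le (hβ : ∀ x, ∀ᵐ a ∂(β x), a ∈ Set.Icc (-1 : ℝ) 1)
    {A B : Matrix Λ Λ ℝ} {c : ℝ} (hc : 0 < c) (hc1 : c < 1) (hBs : B.IsSymm) (hBA : B * A = 1)
    (hB : ∀ h : Λ → ℝ, 1 / c * (h ⬝ᵥ h) ≤ h ⬝ᵥ B *ᵥ h)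
    {g f : (Λ → ℝ) → ℝ} (hg : Continuous g) (hpos : ∀ σ, 0 < g σ) (hf : Continuous f)
    (hloc : ∀ h, ent (fieldMeasure β h) g ≤ ∫ σ, f σ ∂(fieldMeasure β h)) :
    ent ((Measure.pi β).tilted fun σ => 1 / 2 * (σ ⬝ᵥ A *ᵥ σ)) g
      ≤ 1 / (1 - c) * ∫ σ, f σ ∂((Measure.pi β).tilted fun σ => 1 / 2 * (σ ⬝ᵥ A *ᵥ σ)) := by
  have hprob := isProbabilityMeasure_fieldMeasure hβ
  have hcube := fieldMeasure_ae_mem_cube hβ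
  set ϱ : Measure (Λ → ℝ) := volume.tilted (fieldLogDensity β B) with hϱ
  have hi := integrable_exp_fieldLogDensity hβ hc hB
  have hW := integral_pos_of_pos hi fun h => Real.exp_pos _
  have : IsProbabilityMeasure ϱ := isProbabilityMeasure_tilted hi
  have mix : ∀ u : (Λ → ℝ) → ℝ, Continuous u → ∫ h, (∫ σ, u σ ∂(fieldMeasure β h)) ∂ϱ
      = ∫ σ, u σ ∂((Measure.pi β).tilted fun σ => 1 / 2 * (σ ⬝ᵥ A *ᵥ σ)) :=
    fun u hu => integral_integral_fieldMeasure hβ hc hBs hBA hB hu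
  have bounded : ∀ u : (Λ → ℝ) → ℝ, Continuous u → ∃ K, ∀ h,
      |∫ σ, u σ ∂(fieldMeasure β h)| ≤ K := by
    intro u hu
    obtain ⟨K, hK⟩ := (isCompact_Icc (a := (-1 : Λ → ℝ)) (b := 1)).exists_bound_of_continuousOn
      hu.continuousOn
    refine ⟨K, fun h => ?_⟩
    have := hprob h
    have h1 := norm_integral_le_of_norm_le_const (μ := fieldMeasure β h) (f := u) (C := K)
      (by filter_upwards [hcube h] with σ hσ using hK σ hσ)
    simpa using h1
  have hInt : ∀ u : (Λ → ℝ) → ℝ, Continuous u →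
      Integrable (fun h => ∫ σ, u σ ∂(fieldMeasure β h)) ϱ := by
    intro u hu
    obtain ⟨K, hK⟩ := bounded u hu
    exact Integrable.of_bound (continuous_integral_fieldMeasure hβ hu).aestronglyMeasurable K
      (.of_forall hK)
  have hgl : Continuous fun σ => g σ * Real.log (g σ) :=
    hg.mul (hg.log fun σ => (hpos σ).ne')
  set G : (Λ → ℝ) → ℝ := fun h => ∫ σ, g σ ∂(fieldMeasure β h) with hGdef
  have hGc : Continuous G := continuous_integral_fieldMeasure hβ hg
  obtain ⟨a, ha, hag⟩ : ∃ a, 0 < a ∧ ∀ σ ∈ Set.Icc (-1 : Λ → ℝ) 1, a ≤ g σ := by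
    obtain ⟨σ₀, -, h0⟩ := (isCompact_Icc (a := (-1 : Λ → ℝ)) (b := 1)).exists_isMinOn
      ⟨0, by constructor <;> intro x <;> simp⟩ hg.continuousOn
    exact ⟨g σ₀, hpos σ₀, fun σ hσ => h0 hσ⟩
  have haG : ∀ h, a ≤ G h := by
    intro h
    have := hprob h
    have h1 := integral_mono_ae (integrable_const a) (integrable_cube (hcube h) hg)
      (by filter_upwards [hcube h] with σ hσ using hag σ hσ)
    simpa using h1
  obtain ⟨b, hb⟩ := bounded g hg
  have hGb : ∀ h, G h ≤ b := fun h => (le_abs_self _).trans (hb h)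
  have hGpos : ∀ h, 0 < G h := fun h => ha.trans_le (haG h)
  obtain ⟨K, hK⟩ := bounded _ hgl
  set E : (Λ → ℝ) → ℝ := fun h => ent (fieldMeasure β h) g with hEdef
  have hEeq : ∀ h, E h = ∫ σ, g σ * Real.log (g σ) ∂(fieldMeasure β h) - G h * Real.log (G h) :=
    fun h => rfl
  have hGlc : Continuous fun h => G h * Real.log (G h) :=
    hGc.mul (hGc.log fun h => (hGpos h).ne')
  have hEc : Continuous E := (continuous_integral_fieldMeasure hβ hgl).sub hGlc
  set L := b * (|Real.log a| + |Real.log b|)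
  have hGl : ∀ h, |G h * Real.log (G h)| ≤ L := fun h => abs_mul_log_le ha (haG h) (hGb h)
  have hEb : ∀ h, |E h| ≤ K + L := fun h => by
    rw [hEeq]
    exact (abs_sub _ _).trans (add_le_add (hK h) (hGl h))
  have hEi : Integrable E ϱ := .of_bound hEc.aestronglyMeasurable (K + L) (.of_forall hEb)
  have hGli : Integrable (fun h => G h * Real.log (G h)) ϱ :=
    .of_bound hGlc.aestronglyMeasurable L (.of_forall hGl)
  have hl : 0 < 1 / c - 1 := by
    rw [sub_pos, lt_div_iff₀ hc]; linarith
  -- The normalization of `ϱ` is absorbed into the logarithm of its density.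
  have hBL := ent_le_of_uniformly_logConcave (ϱ := ϱ) (G := G) (R := fun h => 2 * E h / G h)
    (φ := fun h => fieldLogDensity β B h
      - Real.log (∫ h, Real.exp (fieldLogDensity β B h))) (l := 1 / c - 1)
    (a := a) (b := b) (R0 := 2 * (K + L) / a) (n := Fintype.card Λ)
    ((continuous_fieldLogDensity hβ B).sub continuous_const).measurable hl
    (by
      intro t s ht hs hts x y
      have h1 := fieldLogDensity_combo hβ hB ht hs hts x y
      have h2 : t * Real.log (∫ h, Real.exp (fieldLogDensity β B h))
          + s * Real.log (∫ h, Real.exp (fieldLogDensity β B h))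
          = Real.log (∫ h, Real.exp (fieldLogDensity β B h)) := by
        rw [← add_mul, hts, one_mul]
      linarith)
    (by
      simp only [Real.exp_sub, Real.exp_log hW]
      rfl)
    hGc.measurable
    ((continuous_const.mul hEc).div hGc fun h => (hGpos h).ne').measurable
    ha haG hGb
    (by
      intro h
      have h1 := (abs_le.1 (hEb h)).2
      have h2 : 0 ≤ K + L := (abs_nonneg _).trans (hEb h)
      exact div_le_div₀ (by positivity) (by linarith) ha (haG h))
    (by
      intro h
      have := hprob h
      refine ⟨fun x => (∫ σ, σ x * g σ ∂(fieldMeasure β h)) / (∫ σ, g σ ∂(fieldMeasure β h))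
        - ∫ σ, σ x ∂(fieldMeasure β h), ?_, ?_⟩
      · have hsite := isProbabilityMeasure_site_tilted hβ h
        have h1 := sq_mean_shift_le (β := fun x => (β x).tilted fun a => h x * a)
          (fun x => (tilted_absolutelyContinuous _ _).ae_le (hβ x)) hg hpos _ (fun x => rfl)
        rw [← fieldMeasure_eq_pi] at h1
        exact h1
      · intro k
        have h1 := integral_tilted_le (hcube h) hg hpos _ (fun x => rfl) k
        rw [← fieldMeasure_add hβ] at h1
        exact h1)
  -- The factor `G` cancels, so the entropy of the field is bounded by the local entropies `E`.
  have hGR : ∫ h, G h * (2 * E h / G h) ∂ϱ = 2 * ∫ h, E h ∂ϱ := by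
    rw [← integral_const_mul]
    congr 1
    ext h
    have := (hGpos h).ne'
    field_simp
  rw [hGR] at hBL
  have hEle : ∫ h, E h ∂ϱ ≤ ∫ σ, f σ ∂((Measure.pi β).tilted fun σ => 1 / 2 * (σ ⬝ᵥ A *ᵥ σ)) := by
    rw [← mix f hf]
    exact integral_mono hEi (hInt f hf) hloc
  have hEint : ∫ h, E h ∂ϱ
      = (∫ h, (∫ σ, g σ * Real.log (g σ) ∂(fieldMeasure β h)) ∂ϱ)
        - ∫ h, G h * Real.log (G h) ∂ϱ := by
    rw [← integral_sub (hInt _ hgl) hGli]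
    rfl
  -- Chain rule for the entropy of a mixture.
  have hchain : ent ((Measure.pi β).tilted fun σ => 1 / 2 * (σ ⬝ᵥ A *ᵥ σ)) g
      = ∫ h, E h ∂ϱ + ent ϱ G := by
    rw [hEint, mix _ hgl]
    unfold ent
    rw [hGdef, mix g hg]
    ring
  rw [hchain]
  have hfac : ∫ h, E h ∂ϱ + 1 / (2 * (1 / c - 1)) * (2 * ∫ h, E h ∂ϱ)
      = 1 / (1 - c) * ∫ h, E h ∂ϱ := by
    have h1 : (1 : ℝ) - c ≠ 0 := by linarith
    have h2 : (1 : ℝ) / c - 1 = (1 - c) / c := by field_simp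
    rw [h2]
    field_simp
    ring
  have h1c : 0 ≤ 1 / (1 - c) := by
    have : 0 < 1 - c := by linarith
    positivity
  have := mul_le_mul_of_nonneg_left hEle h1c
  linarith

end Factorization

/-! ### Single-site perturbation -/

/-- The Holley–Stroock perturbation argument for the weight `exp (-c a² / 2)` on `[-1, 1]`. The
weight lies between `exp (-c / 2)` and `1`, and the entropy is the minimum over `τ` of the integral
of a nonnegative function, so only the oscillation `c / 2` of the exponent is lost. -/
lemma ent_sq_tilted_sq_le {m : Measure ℝ} [IsProbabilityMeasure m]
    (hm : ∀ᵐ a ∂m, a ∈ Set.Icc (-1 : ℝ) 1) {c C : ℝ} (hc : 0 < c) (hC : 0 ≤ C)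
    {f : ℝ → ℝ} (hf : ContDiff ℝ (⊤ : ℕ∞) f) (hpos : ∀ a, 0 < f a)
    (hLSI : ent m (fun a => f a ^ 2) ≤ C * ∫ a, deriv f a ^ 2 ∂m) :
    ent (m.tilted fun a => -(c / 2) * a ^ 2) (fun a => f a ^ 2)
      ≤ C * Real.exp (c / 2) * ∫ a, deriv f a ^ 2 ∂(m.tilted fun a => -(c / 2) * a ^ 2) := by
  have hInt : ∀ u : ℝ → ℝ, Continuous u → Integrable u m :=
    fun u hu => integrable_of_ae_mem_compact isCompact_Icc hm hu
  set w : ℝ → ℝ := fun a => -(c / 2) * a ^ 2 with hw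
  have hwc : Continuous fun a => Real.exp (w a) := by rw [hw]; fun_prop
  have hprob : IsProbabilityMeasure (m.tilted w) := isProbabilityMeasure_tilted (hInt _ hwc)
  have hm' : ∀ᵐ a ∂(m.tilted w), a ∈ Set.Icc (-1 : ℝ) 1 :=
    (tilted_absolutelyContinuous m w).ae_le hm
  have hInt' : ∀ u : ℝ → ℝ, Continuous u → Integrable u (m.tilted w) :=
    fun u hu => integrable_of_ae_mem_compact isCompact_Icc hm' hu
  set g : ℝ → ℝ := fun a => f a ^ 2 with hg
  have hgc : Continuous g := hf.continuous.pow 2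
  have hgpos : ∀ a, 0 < g a := fun a => by have := hpos a; simp only [hg]; positivity
  have hglc : Continuous fun a => g a * Real.log (g a) :=
    hgc.mul (hgc.log fun a => (hgpos a).ne')
  have hτ := integral_pos_of_pos (hInt g hgc) hgpos
  have hI := integral_pos_of_pos (hInt _ hwc) fun a => Real.exp_pos _
  have h1 := ent_le_integral (m := m.tilted w) hgpos (hInt' g hgc) (hInt' _ hglc) hτ
  set τ := ∫ a, g a ∂m with hτdef
  set ψ : ℝ → ℝ := fun a => g a * Real.log (g a) - g a * Real.log τ - g a + τ with hψ
  have hψc : Continuous ψ := by rw [hψ]; fun_prop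
  have hψ0 : ∀ a, 0 ≤ ψ a := fun a => by
    have := mul_log_add_sub_le (hgpos a) hτ
    simp only [hψ]; linarith
  have hψint : ∫ a, ψ a ∂m = ent m g := by
    simp only [hψ]
    rw [integral_add (hInt _ (by fun_prop)) (integrable_const _),
      integral_sub (hInt _ (by fun_prop)) (hInt _ hgc), integral_sub (hInt _ hglc)
      (hInt _ (by fun_prop)), integral_mul_const]
    simp only [integral_const, probReal_univ, one_smul, ent]
    ring
  have hdc : Continuous fun a => deriv f a ^ 2 := (hf.continuous_deriv (by simp)).pow 2
  rw [integral_tilted_eq_div] at h1 ⊢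
  refine h1.trans ?_
  rw [mul_div_assoc', div_le_div_iff_of_pos_right hI]
  have h2 : ∫ a, ψ a * Real.exp (w a) ∂m ≤ ∫ a, ψ a ∂m := by
    refine integral_mono (hInt _ (hψc.mul hwc)) (hInt _ hψc) fun a => ?_
    refine mul_le_of_le_one_right (hψ0 a) (Real.exp_le_one_iff.2 ?_)
    simp only [hw]
    nlinarith [mul_nonneg hc.le (sq_nonneg a)]
  have h3 : ∫ a, deriv f a ^ 2 ∂m
      ≤ Real.exp (c / 2) * ∫ a, deriv f a ^ 2 * Real.exp (w a) ∂m := by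
    rw [← integral_const_mul]
    refine integral_mono_ae (hInt _ hdc) (hInt _ (continuous_const.mul (hdc.mul hwc))) ?_
    filter_upwards [hm] with a ha
    have h4 : 1 ≤ Real.exp (c / 2) * Real.exp (w a) := by
      rw [← Real.exp_add, Real.one_le_exp_iff]
      have : a ^ 2 ≤ 1 := (sq_le_one_iff_abs_le_one a).2 (abs_le.2 ha)
      simp only [hw]
      nlinarith
    nlinarith [sq_nonneg (deriv f a)]
  calc ∫ a, ψ a * Real.exp (w a) ∂m ≤ ent m g := h2.trans hψint.le
    _ ≤ C * ∫ a, deriv f a ^ 2 ∂m := hLSI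
    _ ≤ C * (Real.exp (c / 2) * ∫ a, deriv f a ^ 2 * Real.exp (w a) ∂m) := by gcongr
    _ = _ := by ring

/-! ### The coupling matrix and the choice of the shift -/

section Shift

variable {Λ : Type*} [Fintype Λ] [DecidableEq Λ]

/-- For `r < c` the matrix `A = c - M` is positive definite with `A ≤ c`, hence invertible with
`A⁻¹ ≥ 1 / c`. -/
lemma exists_inverse_shift {M : Matrix Λ Λ ℝ} (hMsymm : M.IsSymm) (hMpos : M.PosDef)
    {r c : ℝ} (hMr : ∀ v : Λ → ℝ, v ⬝ᵥ M *ᵥ v ≤ r * (v ⬝ᵥ v)) (hrc : r < c) (hc : 0 < c) :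
    ∃ B : Matrix Λ Λ ℝ, B.IsSymm ∧ B * (c • 1 - M) = 1 ∧
      ∀ h : Λ → ℝ, 1 / c * (h ⬝ᵥ h) ≤ h ⬝ᵥ B *ᵥ h := by
  set A : Matrix Λ Λ ℝ := c • 1 - M with hA
  have hAv : ∀ v, A *ᵥ v = c • v - M *ᵥ v := fun v => by
    rw [hA, sub_mulVec, smul_mulVec, one_mulVec]
  have hAs : A.IsSymm := by
    rw [Matrix.IsSymm, hA, transpose_sub, transpose_smul, transpose_one, hMsymm.eq]
  have hAform : ∀ v, v ⬝ᵥ A *ᵥ v = c * (v ⬝ᵥ v) - v ⬝ᵥ M *ᵥ v := fun v => by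
    rw [hAv, dotProduct_sub, dotProduct_smul, smul_eq_mul]
  have hvv : ∀ v : Λ → ℝ, 0 ≤ v ⬝ᵥ v := fun v => Finset.sum_nonneg fun i _ => mul_self_nonneg _
  have hM0 : ∀ v : Λ → ℝ, 0 ≤ v ⬝ᵥ M *ᵥ v := fun v => by
    simpa using hMpos.posSemidef.dotProduct_mulVec_nonneg v
  have hApos : A.PosDef := by
    refine PosDef.of_dotProduct_mulVec_pos ?_ fun v hv => ?_
    · rw [Matrix.IsHermitian, conjTranspose_eq_transpose_of_trivial, hAs.eq]
    · rw [star_trivial, hAform]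
      have h1 : 0 < v ⬝ᵥ v := lt_of_le_of_ne (hvv v) fun h => hv (dotProduct_self_eq_zero.1 h.symm)
      nlinarith [hMr v]
  have hdet : IsUnit A.det := (Matrix.isUnit_iff_isUnit_det A).1 hApos.isUnit
  refine ⟨A⁻¹, ?_, nonsing_inv_mul A hdet, fun h => ?_⟩
  · rw [Matrix.IsSymm, transpose_nonsing_inv, hAs.eq]
  · set k := A⁻¹ *ᵥ h
    have hk : A *ᵥ k = h := by
      rw [mulVec_mulVec, mul_nonsing_inv A hdet, one_mulVec]
    have hkA : k ⬝ᵥ A *ᵥ h = h ⬝ᵥ h := by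
      rw [dotProduct_mulVec, ← mulVec_transpose, hAs.eq, hk]
    -- The form `A` is nonnegative at `k - h / c` and at most `c` at `h = A k`.
    have h1 : 0 ≤ (k - (1 / c) • h) ⬝ᵥ A *ᵥ (k - (1 / c) • h) := by
      rw [hAform]
      nlinarith [hMr (k - (1 / c) • h), hvv (k - (1 / c) • h)]
    rw [mulVec_sub, mulVec_smul, hk] at h1
    simp only [sub_dotProduct, dotProduct_sub, smul_dotProduct, dotProduct_smul, smul_eq_mul,
      hkA] at h1
    have h2 : h ⬝ᵥ A *ᵥ h ≤ c * (h ⬝ᵥ h) := by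
      rw [hAform]; linarith [hM0 h]
    have h3 : 1 / c * (1 / c * (h ⬝ᵥ A *ᵥ h)) ≤ 1 / c * (1 / c * (c * (h ⬝ᵥ h))) := by gcongr
    have h4 : 1 / c * (1 / c * (c * (h ⬝ᵥ h))) = 1 / c * (h ⬝ᵥ h) := by field_simp
    have h5 : k ⬝ᵥ h = h ⬝ᵥ k := dotProduct_comm _ _
    linarith

/-- The loss `exp (c / 2)` from the perturbation is strictly smaller than `1 + r` at `c = r`, which
leaves room to take `c` slightly larger than `r`. -/
lemma exists_shift {r : ℝ} (hr0 : 0 < r) (hr : r < 1) :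
    ∃ c, r < c ∧ c < 1 ∧ Real.exp (c / 2) / (1 - c) ≤ 1 + 2 * r / (1 - r) := by
  have h1 : Real.exp (r / 2) / (1 - r) < 1 + 2 * r / (1 - r) := by
    have h2 : 1 + 2 * r / (1 - r) = (1 + r) / (1 - r) := by
      have : 1 - r ≠ 0 := by linarith
      field_simp; ring
    rw [h2, div_lt_div_iff_of_pos_right (by linarith)]
    have h3 := Real.one_sub_le_exp_neg (r / 2)
    have h4 : Real.exp (r / 2) * Real.exp (-(r / 2)) = 1 := by rw [← Real.exp_add]; simp
    have h5 := Real.exp_pos (r / 2)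
    have h6 : Real.exp (r / 2) * (1 - r / 2) ≤ 1 :=
      (mul_le_mul_of_nonneg_left h3 h5.le).trans h4.le
    nlinarith
  have hc : ContinuousAt (fun c : ℝ => Real.exp (c / 2) / (1 - c)) r :=
    ContinuousAt.div (by fun_prop) (by fun_prop) (by linarith)
  have e1 : ∀ᶠ c in nhds r, Real.exp (c / 2) / (1 - c) < 1 + 2 * r / (1 - r) :=
    hc.eventually (gt_mem_nhds h1)
  have e2 : ∀ᶠ c in nhds r, c < 1 := eventually_lt_nhds hr
  have e3 : ∀ᶠ c in nhdsWithin r (Set.Ioi r), r < c := self_mem_nhdsWithin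
  obtain ⟨c, h2, h3, h4⟩ :=
    (e3.and ((e1.and e2).filter_mono nhdsWithin_le_nhds)).exists
  exact ⟨c, h2, h4, h3.le⟩

/-! ### Positive test functions suffice -/

lemma sq_deriv_sqrt_le {f : ℝ → ℝ} {a ε : ℝ} (hf : DifferentiableAt ℝ f a) (hε : 0 < ε) :
    deriv (fun t => Real.sqrt (f t ^ 2 + ε)) a ^ 2 ≤ deriv f a ^ 2 := by
  have hp : 0 < f a ^ 2 + ε := by positivity
  have h := ((hf.hasDerivAt.pow 2).add_const ε).sqrt hp.ne'
  have h' : deriv (fun t => Real.sqrt (f t ^ 2 + ε)) a = _ := h.deriv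
  rw [h', Pi.pow_apply, div_pow, mul_pow _ (Real.sqrt _), Real.sq_sqrt hp.le,
    div_le_iff₀ (by positivity)]
  have : 0 ≤ ε * deriv f a ^ 2 := by positivity
  norm_num
  nlinarith

/-- Reduction to positive test functions: apply the inequality to `√(F² + ε)`, whose partial
derivatives are dominated by those of `F`, and let `ε → 0`. -/
lemma ent_sq_le_of_pos {m : Measure (Λ → ℝ)} [IsProbabilityMeasure m]
    (hm : ∀ᵐ σ ∂m, σ ∈ Set.Icc (-1 : Λ → ℝ) 1) {C : ℝ} (hC : 0 ≤ C)
    (H : ∀ F : (Λ → ℝ) → ℝ, ContDiff ℝ (⊤ : ℕ∞) F → (∀ σ, 0 < F σ) →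
      ent m (fun σ => F σ ^ 2)
        ≤ C * ∑ x, ∫ σ, (deriv (fun t => F (Function.update σ x t)) (σ x)) ^ 2 ∂m)
    {F : (Λ → ℝ) → ℝ} (hF : ContDiff ℝ (⊤ : ℕ∞) F) :
    ent m (fun σ => F σ ^ 2)
      ≤ C * ∑ x, ∫ σ, (deriv (fun t => F (Function.update σ x t)) (σ x)) ^ 2 ∂m := by
  have hpar : ∀ u : ℝ → (Λ → ℝ) → ℝ, Continuous (Function.uncurry u) →
      Continuous fun ε => ∫ σ, u ε σ ∂m := by
    intro u hu
    have h : m.restrict (Set.Icc (-1 : Λ → ℝ) 1) = m := Measure.restrict_eq_self_of_ae_mem hm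
    rw [← h]
    exact continuous_parametric_integral_of_continuous hu isCompact_Icc
  have hsq : Continuous fun p : ℝ × (Λ → ℝ) => F p.2 ^ 2 + p.1 :=
    ((hF.continuous.comp continuous_snd).pow 2).add continuous_fst
  have hcont : Continuous fun ε : ℝ => ent m (fun σ => F σ ^ 2 + ε) := by
    unfold ent
    exact (hpar (fun ε σ => (F σ ^ 2 + ε) * Real.log (F σ ^ 2 + ε))
      (Real.continuous_mul_log.comp hsq)).sub
      (Real.continuous_mul_log.comp (hpar (fun ε σ => F σ ^ 2 + ε) hsq))
  have hlim : Filter.Tendsto (fun ε : ℝ => ent m (fun σ => F σ ^ 2 + ε))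
      (nhdsWithin 0 (Set.Ioi 0)) (nhds (ent m (fun σ => F σ ^ 2))) := by
    have := hcont.tendsto 0
    simp only [add_zero] at this
    exact this.mono_left nhdsWithin_le_nhds
  refine le_of_tendsto hlim ?_
  filter_upwards [self_mem_nhdsWithin] with ε hε
  have hε' : 0 < ε := hε
  have hp : ∀ σ, 0 < F σ ^ 2 + ε := fun σ => by positivity
  have hFε : ContDiff ℝ (⊤ : ℕ∞) fun σ => Real.sqrt (F σ ^ 2 + ε) :=
    ((hF.pow 2).add contDiff_const).sqrt fun σ => (hp σ).ne'
  have h1 := H _ hFε fun σ => Real.sqrt_pos.2 (hp σ)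
  simp only [Real.sq_sqrt (hp _).le] at h1
  refine h1.trans (mul_le_mul_of_nonneg_left (Finset.sum_le_sum fun x _ => ?_) hC)
  refine integral_mono (integrable_cube hm ((continuous_deriv_update hFε x).pow 2))
    (integrable_cube hm ((continuous_deriv_update hF x).pow 2)) fun σ => ?_
  refine sq_deriv_sqrt_le (f := fun t => F (Function.update σ x t)) ?_ hε'
  exact ((hF.differentiable (by simp)).differentiableAt.comp _
    (hasDerivAt_update σ x (σ x)).differentiableAt)

end Shift

/-- Remark (ii) of the paper: the main log-Sobolev inequality for site-dependent
single-spin measures `μ_x` on `ℝ` supported in `[-1,1]`, assuming the tilted measures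
`μ_x^h ∝ e^{hσ} μ_x` satisfy a LSI with constant `γ` uniformly in the external field
`h`, and that the symmetric positive definite coupling matrix `M` has largest
eigenvalue `r = ‖M‖ < 1` (encoded by the Rayleigh quotient bound). -/
theorem lsi_site_dependent_spins
    (Λ : Type*) [Fintype Λ] [DecidableEq Λ] [Nonempty Λ]
    (μs : Λ → MeasureTheory.Measure ℝ) [∀ x, IsProbabilityMeasure (μs x)]
    (hsupp : ∀ x, μs x (Set.Icc (-1 : ℝ) 1)ᶜ = 0)
    (μh : Λ → ℝ → MeasureTheory.Measure ℝ)
    (hμh : ∀ x h, μh x h = (μs x).withDensity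
      (fun σ => ENNReal.ofReal (Real.exp (h * σ) / ∫ σ', Real.exp (h * σ') ∂(μs x))))
    (γ : ℝ) (hγ : 0 < γ)
    (hLSI : ∀ x (h : ℝ) (f : ℝ → ℝ), ContDiff ℝ (⊤ : ℕ∞) f →
      ent (μh x h) (fun σ => (f σ) ^ 2)
        ≤ (2 / γ) * ∫ σ, (deriv f σ) ^ 2 ∂(μh x h))
    (M : Matrix Λ Λ ℝ) (hMsymm : M.IsSymm) (hMpos : M.PosDef)
    (r : ℝ) (hMr : ∀ v : Λ → ℝ, v ⬝ᵥ M.mulVec v ≤ r * (v ⬝ᵥ v)) (hr : r < 1)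
    (ν : MeasureTheory.Measure (Λ → ℝ))
    (hν : ν = (Measure.pi μs).withDensity (fun σ => ENNReal.ofReal
      (Real.exp (-(1 / 2) * ∑ x, ∑ y, M x y * σ x * σ y) /
        ∫ σ', Real.exp (-(1 / 2) * ∑ x, ∑ y, M x y * σ' x * σ' y) ∂(Measure.pi μs))))
    (F : (Λ → ℝ) → ℝ) (hF : ContDiff ℝ (⊤ : ℕ∞) F) :
    ent ν (fun σ => (F σ) ^ 2)
      ≤ (2 / γ) * (1 + 2 * r / (1 - r)) *
          ∑ x : Λ, ∫ σ,
            (deriv (fun t => F (Function.update σ x t)) (σ x)) ^ 2 ∂ν := by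
  have hr0 : 0 < r := by
    obtain ⟨x⟩ := ‹Nonempty Λ›
    have h1 := hMpos.dotProduct_mulVec_pos (x := Pi.single x 1) (by simp)
    rw [star_trivial] at h1
    have h2 := h1.trans_le (hMr (Pi.single x 1))
    simpa using h2
  obtain ⟨c, hrc, hc1, hcle⟩ := exists_shift hr0 hr
  have hc : 0 < c := hr0.trans hrc
  obtain ⟨B, hBs, hBA, hB⟩ := exists_inverse_shift hMsymm hMpos hMr hrc hc
  have hμ : ∀ x, ∀ᵐ a ∂(μs x), a ∈ Set.Icc (-1 : ℝ) 1 := fun x => hsupp x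
  -- `Measure.tilted` unfolds to the density in the hypothesis on `μh`.
  have hμh' : ∀ x h, μh x h = (μs x).tilted fun a => h * a := hμh
  have hInt : ∀ x, ∀ u : ℝ → ℝ, Continuous u → Integrable u (μs x) :=
    fun x u hu => integrable_of_ae_mem_compact isCompact_Icc (hμ x) hu
  -- The quadratic self-interaction `c` moves from the coupling to the single-site measures.
  let β : Λ → Measure ℝ := fun x => (μs x).tilted fun a => -(c / 2) * a ^ 2
  have hβp : ∀ x, IsProbabilityMeasure (β x) := fun x =>
    isProbabilityMeasure_tilted (hInt x _ (by fun_prop))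
  have hβ : ∀ x, ∀ᵐ a ∂(β x), a ∈ Set.Icc (-1 : ℝ) 1 := fun x =>
    (tilted_absolutelyContinuous _ _).ae_le (hμ x)
  have hνeq : ν = (Measure.pi β).tilted fun σ => 1 / 2 * (σ ⬝ᵥ (c • 1 - M) *ᵥ σ) := by
    have h1 : ν = (Measure.pi μs).tilted
      fun σ => -(1 / 2) * ∑ x, ∑ y, M x y * σ x * σ y := hν
    rw [h1, pi_tilted, tilted_tilted
      (integrable_cube (pi_ae_mem_cube hμ) (by fun_prop))]
    congr 1
    ext σ
    have h2 : ∑ x, ∑ y, M x y * σ x * σ y = σ ⬝ᵥ M *ᵥ σ := by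
      simp only [dotProduct, mulVec, Finset.mul_sum]
      exact Finset.sum_congr rfl fun x _ => Finset.sum_congr rfl fun y _ => by ring
    have h3 : ∑ x, -(c / 2) * σ x ^ 2 = -(c / 2) * (σ ⬝ᵥ σ) := by
      simp only [dotProduct, Finset.mul_sum]
      exact Finset.sum_congr rfl fun x _ => by ring
    rw [Pi.add_apply, h2, h3, sub_mulVec, smul_mulVec, one_mulVec, dotProduct_sub,
      dotProduct_smul, smul_eq_mul]
    ring
  have hsite : ∀ (h : Λ → ℝ) x, ∀ f : ℝ → ℝ, ContDiff ℝ (⊤ : ℕ∞) f → (∀ a, 0 < f a) →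
      ent ((β x).tilted fun a => h x * a) (fun a => f a ^ 2)
        ≤ 2 / γ * Real.exp (c / 2) * ∫ a, deriv f a ^ 2 ∂((β x).tilted fun a => h x * a) := by
    intro h x f hf hpos
    simp only [β]
    rw [tilted_comm (hInt x _ (by fun_prop)) (hInt x _ (by fun_prop))]
    have hp : IsProbabilityMeasure ((μs x).tilted fun a => h x * a) :=
      isProbabilityMeasure_tilted (hInt x _ (by fun_prop))
    refine ent_sq_tilted_sq_le ((tilted_absolutelyContinuous _ _).ae_le (hμ x)) hc
      (by positivity) hf hpos ?_
    rw [← hμh']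
    exact hLSI x (h x) f hf
  have hνcube : ∀ᵐ σ ∂ν, σ ∈ Set.Icc (-1 : Λ → ℝ) 1 := by
    rw [hνeq]
    exact ae_mem_cube_tilted (pi_ae_mem_cube hβ) _
  have hνprob : IsProbabilityMeasure ν := by
    rw [hνeq]
    refine isProbabilityMeasure_tilted_cube (pi_ae_mem_cube hβ) ?_
    simp only [dotProduct, mulVec]
    fun_prop
  have h1r : 0 < 1 - r := by linarith
  refine ent_sq_le_of_pos hνcube (by positivity) (fun F hF hpos => ?_) hF
  have hdc : ∀ x, Continuous fun σ : Λ → ℝ =>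
      deriv (fun t => F (Function.update σ x t)) (σ x) ^ 2 :=
    fun x => (continuous_deriv_update hF x).pow 2
  have key := ent_quadratic_le hβ hc hc1 hBs hBA hB (g := fun σ => F σ ^ 2)
    (f := fun σ => 2 / γ * Real.exp (c / 2)
      * ∑ x, deriv (fun t => F (Function.update σ x t)) (σ x) ^ 2)
    (hF.continuous.pow 2) (fun σ => by have := hpos σ; positivity)
    (continuous_const.mul (continuous_finsetSum _ fun x _ => hdc x))
    (by
      intro h
      have hp := isProbabilityMeasure_site_tilted hβ h
      rw [integral_const_mul, integral_finsetSum _ fun x _ => by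
        have := isProbabilityMeasure_fieldMeasure hβ h
        exact integrable_cube (fieldMeasure_ae_mem_cube hβ h) (hdc x), fieldMeasure_eq_pi]
      exact ent_sq_pi_le (fun x => (tilted_absolutelyContinuous _ _).ae_le (hβ x)) (hsite h)
        hF hpos)
  rw [← hνeq, integral_const_mul,
    integral_finsetSum _ fun x _ => integrable_cube hνcube (hdc x)] at key
  refine key.trans ?_
  have hS : 0 ≤ ∑ x, ∫ σ, deriv (fun t => F (Function.update σ x t)) (σ x) ^ 2 ∂ν :=
    Finset.sum_nonneg fun x _ => integral_nonneg fun σ => sq_nonneg _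
  rw [← mul_assoc]
  refine mul_le_mul_of_nonneg_right ?_ hS
  calc 1 / (1 - c) * (2 / γ * Real.exp (c / 2))
      = 2 / γ * (Real.exp (c / 2) / (1 - c)) := by ring
    _ ≤ _ := by gcongr
end

section
/- Let Λ be a nonempty finite set, n ≥ 1, let μ be a probability measure on ℝ^n supported in the closed unit ball, let M be a symmetric positive definite real Λ×Λ matrix, and let c > 0 be such that c·Id − M is positive definite. Set B = (M^{−1} − c^{−1}·Id)^{−1} (a positive definite matrix acting on (ℝ^n)^Λ via M ⊗ Id), V(ψ) = −log ∫ exp(−c|ψ−σ|²/2) dμ(σ) for ψ ∈ ℝ^n, and for φ ∈ (ℝ^n)^Λ let μ_φ = ⊗_{x∈Λ} μ_{φ_x}, where μ_ψ has density e^{V(ψ)}e^{−c|ψ−σ|²/2} with respect to μ. Let ν be the probability measure on (ℝ^n)^Λ with density proportional to exp(−(1/2)Σ_{x,y} M_{xy} σ_x·σ_y) with respect to ⊗_{x∈Λ} μ, and let ν_r be the probability measure on (ℝ^n)^Λ with Lebesgue density proportional to exp(−(φ, Bφ)/2 − Σ_{x∈Λ} V(φ_x)). Then for every bounded measurable F :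 (ℝ^n)^Λ → ℝ, ∫ F dν = ∫ (∫ F dμ_φ) dν_r(φ). -/
open MeasureTheory Matrix Real
open scoped RealInnerProductSpace

/-!
Write `D = c - M`. The matrix identity behind the theorem is `B = M + M D⁻¹ M`, which shows that `B`
is positive semidefinite and gives the completed square
`c |φ - σ|² + (φ, Bφ) = (φ - Aσ, (B + c)(φ - Aσ)) + (σ, Mσ)` with `A = 1 - c⁻¹ M`
(`completed_square`). By translation invariance of Lebesgue measure the joint weight
`G(φ, σ) = e^{-(φ, Bφ)/2} e^{-c|φ - σ|²/2}` then satisfies `∫ G(φ, σ) dφ = K e^{-(σ, Mσ)/2}`, where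
`K = ∫ e^{-(φ, (B + c)φ)/2} dφ` is finite because `B ≥ 0`, and positive.

The factor `e^{-V(φ_x)}` in the density of `ν_r` cancels the normalisation `e^{V(φ_x)}` of `μ_{φ_x}`,
so both sides of the claim are `∫∫ F(σ) G(φ, σ)` up to normalisation, integrated in different orders.
Fubini's theorem for a general `F` identifies the numerators up to the factor `K`, and for `F = 1` it
identifies the normalising constants up to the same factor.
-/

section Algebra

variable {Λ : Type*} [Fintype Λ] {n : ℕ}

/-- The quadratic form of `A ⊗ Id` on `(ℝⁿ)^Λ`, evaluated coordinate by coordinate. -/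
lemma form_eq_sum_coord (A : Matrix Λ Λ ℝ) (u : Λ → EuclideanSpace ℝ (Fin n)) :
    ∑ x, ∑ y, A x y * ⟪u x, u y⟫ = ∑ i, (fun x => u x i) ⬝ᵥ A *ᵥ (fun x => u x i) := by
  simp only [PiLp.inner_apply, dotProduct, mulVec, Finset.mul_sum]
  symm
  rw [Finset.sum_comm]
  refine Finset.sum_congr rfl fun x _ => ?_
  rw [Finset.sum_comm]
  refine Finset.sum_congr rfl fun y _ => Finset.sum_congr rfl fun i _ => ?_
  simp only [RCLike.inner_apply, conj_trivial]
  ring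

lemma form_nonneg {A : Matrix Λ Λ ℝ} (hA : A.PosSemidef) (u : Λ → EuclideanSpace ℝ (Fin n)) :
    0 ≤ ∑ x, ∑ y, A x y * ⟪u x, u y⟫ := by
  rw [form_eq_sum_coord]
  exact Finset.sum_nonneg fun i _ => by
    simpa using hA.dotProduct_mulVec_nonneg (fun x => u x i)

variable [DecidableEq Λ]

lemma B_eq {M B : Matrix Λ Λ ℝ} (hM : M.PosDef) {c : ℝ} (hc : 0 < c)
    (hcM : (c • (1 : Matrix Λ Λ ℝ) - M).PosDef)
    (hB : B = (M⁻¹ - c⁻¹ • (1 : Matrix Λ Λ ℝ))⁻¹) :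
    B = M + M * (c • (1 : Matrix Λ Λ ℝ) - M)⁻¹ * M := by
  have h1 : M * M⁻¹ = 1 := Matrix.mul_nonsing_inv _ ((Matrix.isUnit_iff_isUnit_det _).1 hM.isUnit)
  have h2 : (c • (1 : Matrix Λ Λ ℝ) - M)⁻¹ * (c • (1 : Matrix Λ Λ ℝ) - M) = 1 :=
    Matrix.nonsing_inv_mul _ ((Matrix.isUnit_iff_isUnit_det _).1 hcM.isUnit)
  set E := (c • (1 : Matrix Λ Λ ℝ) - M)⁻¹
  have h3 : E * M = c • E - 1 := by
    rw [← h2, mul_sub]; simp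
  rw [hB]
  apply Matrix.inv_eq_left_inv
  have h4 : M * E * M = c • (M * E) - M := by
    rw [mul_assoc, h3, mul_sub]; simp
  have h5 : (M * E * M) * M⁻¹ = M * E := by rw [mul_assoc, h1, mul_one]
  rw [add_mul, mul_sub, mul_sub, h1, h5, h4]
  simp [smul_sub, smul_smul, hc.ne']

lemma B_posSemidef {M B : Matrix Λ Λ ℝ} (hM : M.PosDef) {c : ℝ} (hc : 0 < c)
    (hcM : (c • (1 : Matrix Λ Λ ℝ) - M).PosDef)
    (hB : B = (M⁻¹ - c⁻¹ • (1 : Matrix Λ Λ ℝ))⁻¹) : B.PosSemidef := by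
  rw [B_eq hM hc hcM hB]
  refine hM.posSemidef.add ?_
  have := hcM.posSemidef.inv.mul_mul_conjTranspose_same M
  rwa [hM.isHermitian.eq] at this

/-- The factor `B + c` of the completed square satisfies `(B + c)(1 - c⁻¹ M) = c`. -/
lemma B_add_mul {M B : Matrix Λ Λ ℝ} (hM : M.PosDef) {c : ℝ} (hc : 0 < c)
    (hcM : (c • (1 : Matrix Λ Λ ℝ) - M).PosDef)
    (hB : B = (M⁻¹ - c⁻¹ • (1 : Matrix Λ Λ ℝ))⁻¹) :
    (B + c • (1 : Matrix Λ Λ ℝ)) * (1 - c⁻¹ • M) = c • (1 : Matrix Λ Λ ℝ) := by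
  have h2 : (c • (1 : Matrix Λ Λ ℝ) - M)⁻¹ * (c • (1 : Matrix Λ Λ ℝ) - M) = 1 :=
    Matrix.nonsing_inv_mul _ ((Matrix.isUnit_iff_isUnit_det _).1 hcM.isUnit)
  rw [B_eq hM hc hcM hB]
  set E := (c • (1 : Matrix Λ Λ ℝ) - M)⁻¹
  have h3 : E * M = c • E - 1 := by
    rw [← h2, mul_sub]; simp
  have h4 : M * E * M = c • (M * E) - M := by
    rw [mul_assoc, h3, mul_sub]; simp
  have h5 : M * E * M * M = c • (M * E * M) - M * M := by
    conv_lhs => rw [h4]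
    simp [sub_mul]
  rw [mul_sub, mul_one, mul_smul_comm, add_mul, add_mul, h5, h4]
  simp [smul_sub, smul_smul, hc.ne']

lemma scalar_square {M B : Matrix Λ Λ ℝ} (hM : M.PosDef) {c : ℝ} (hc : 0 < c)
    (hcM : (c • (1 : Matrix Λ Λ ℝ) - M).PosDef)
    (hB : B = (M⁻¹ - c⁻¹ • (1 : Matrix Λ Λ ℝ))⁻¹) (f s : Λ → ℝ) :
    c * ((f - s) ⬝ᵥ (f - s)) + f ⬝ᵥ B *ᵥ f =
      (f - (1 - c⁻¹ • M) *ᵥ s) ⬝ᵥ (B + c • (1 : Matrix Λ Λ ℝ)) *ᵥ (f - (1 - c⁻¹ • M) *ᵥ s)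
        + s ⬝ᵥ M *ᵥ s := by
  have hBs : Bᵀ = B := by
    have := (B_posSemidef hM hc hcM hB).isHermitian.eq
    simpa using this
  have hSA := B_add_mul hM hc hcM hB
  set S := B + c • (1 : Matrix Λ Λ ℝ) with hS
  have hSs : Sᵀ = S := by simp [hS, hBs]
  set t := (1 - c⁻¹ • M) *ᵥ s with ht
  have e1 : S *ᵥ t = c • s := by rw [ht, mulVec_mulVec, hSA, smul_mulVec, one_mulVec]
  have e2 : t ⬝ᵥ S *ᵥ f = c * (s ⬝ᵥ f) := by
    rw [dotProduct_mulVec, ← mulVec_transpose, hSs, e1, smul_dotProduct, smul_eq_mul]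
  have e3 : t ⬝ᵥ s = s ⬝ᵥ s - c⁻¹ * (s ⬝ᵥ M *ᵥ s) := by
    rw [ht, sub_mulVec, one_mulVec, smul_mulVec, sub_dotProduct, smul_dotProduct, smul_eq_mul,
      dotProduct_comm (M *ᵥ s)]
  have e4 : f ⬝ᵥ S *ᵥ f = f ⬝ᵥ B *ᵥ f + c * (f ⬝ᵥ f) := by
    rw [hS, add_mulVec, smul_mulVec, one_mulVec, dotProduct_add, dotProduct_smul, smul_eq_mul]
  rw [mulVec_sub, e1]
  simp only [sub_dotProduct, dotProduct_sub, dotProduct_smul, smul_eq_mul, e2, e3, e4]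
  rw [dotProduct_comm f s]
  field_simp
  ring

/-- Completing the square in the joint Gaussian weight of `(φ, σ)`. -/
lemma completed_square {M B : Matrix Λ Λ ℝ} (hM : M.PosDef) {c : ℝ} (hc : 0 < c)
    (hcM : (c • (1 : Matrix Λ Λ ℝ) - M).PosDef)
    (hB : B = (M⁻¹ - c⁻¹ • (1 : Matrix Λ Λ ℝ))⁻¹) (σ : Λ → EuclideanSpace ℝ (Fin n)) :
    ∃ t : Λ → EuclideanSpace ℝ (Fin n), ∀ φ : Λ → EuclideanSpace ℝ (Fin n),
      c * ∑ x, ‖φ x - σ x‖ ^ 2 + ∑ x, ∑ y, B x y * ⟪φ x, φ y⟫ =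
        (∑ x, ∑ y, B x y * ⟪(φ - t) x, (φ - t) y⟫ + c * ∑ x, ‖(φ - t) x‖ ^ 2)
          + ∑ x, ∑ y, M x y * ⟪σ x, σ y⟫ := by
  refine ⟨fun x => WithLp.toLp 2 fun i => ((1 - c⁻¹ • M) *ᵥ (fun y => σ y i)) x, fun φ => ?_⟩
  simp only [form_eq_sum_coord, EuclideanSpace.real_norm_sq_eq]
  have hn (g : Λ → EuclideanSpace ℝ (Fin n)) :
      c * ∑ x, ∑ i, (g x i) ^ 2 = ∑ i, c * ((fun x => g x i) ⬝ᵥ (fun x => g x i)) := by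
    rw [Finset.sum_comm, Finset.mul_sum]
    simp [dotProduct, pow_two]
  have hn1 := hn (fun x => φ x - σ x)
  rw [hn1, hn, ← Finset.sum_add_distrib, ← Finset.sum_add_distrib, ← Finset.sum_add_distrib]
  refine Finset.sum_congr rfl fun i _ => ?_
  have := scalar_square hM hc hcM hB (fun x => φ x i) (fun x => σ x i)
  rw [add_mulVec, smul_mulVec, one_mulVec, dotProduct_add, dotProduct_smul, smul_eq_mul] at this
  exact this

end Algebra

section Measures

variable {Λ : Type*} [Fintype Λ] {n : ℕ}

/-- A product of measures with integrable densities has the product density. -/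
lemma pi_withDensity_ofReal {E : Type*} [MeasurableSpace E] (μ : Measure E) [IsFiniteMeasure μ]
    (g : Λ → E → ℝ) (hg0 : ∀ x s, 0 ≤ g x s) (hg : ∀ x, Integrable (g x) μ) :
    Measure.pi (fun x => μ.withDensity fun s => ENNReal.ofReal (g x s)) =
      (Measure.pi fun _ : Λ => μ).withDensity fun σ => ENNReal.ofReal (∏ x, g x (σ x)) := by
  have : ∀ x, IsFiniteMeasure (μ.withDensity fun s => ENNReal.ofReal (g x s)) := fun x =>
    isFiniteMeasure_withDensity_ofReal (hg x).2
  refine (Measure.pi_eq fun s hs => ?_)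
  rw [withDensity_apply _ (MeasurableSet.univ_pi hs), Measure.restrict_pi_pi,
    ← ofReal_integral_eq_lintegral_ofReal
      (Integrable.fintype_prod_dep fun x => (hg x).restrict)
      (ae_of_all _ fun σ => Finset.prod_nonneg fun x _ => hg0 x _),
    integral_fintype_prod_eq_prod,
    ENNReal.ofReal_prod_of_nonneg fun x _ => integral_nonneg (hg0 x)]
  refine Finset.prod_congr rfl fun x _ => ?_
  rw [withDensity_apply _ (hs x),
    ofReal_integral_eq_lintegral_ofReal (hg x).restrict (ae_of_all _ (hg0 x))]

lemma integrable_gaussian_pi {c : ℝ} (hc : 0 < c) :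
    Integrable (fun φ : Λ → EuclideanSpace ℝ (Fin n) => rexp (-(c * ∑ x, ‖φ x‖ ^ 2) / 2)) := by
  have h1 : Integrable (fun v : EuclideanSpace ℝ (Fin n) => rexp (-(c * ‖v‖ ^ 2) / 2)) := by
    have := (GaussianFourier.integrable_cexp_neg_mul_sq_norm_add (V := EuclideanSpace ℝ (Fin n))
      (b := ((c / 2 : ℝ) : ℂ)) (by simpa using hc) 0 0).norm
    refine this.congr (ae_of_all _ fun v => ?_)
    simp only [Complex.norm_exp]
    congr 1
    have : (-((c / 2 : ℝ) : ℂ) * (‖v‖ : ℂ) ^ 2 + 0 * ((inner ℝ 0 v : ℝ) : ℂ))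
        = ((-(c * ‖v‖ ^ 2) / 2 : ℝ) : ℂ) := by push_cast; ring
    rw [this, Complex.ofReal_re]
  have h2 := Integrable.fintype_prod (ι := Λ) (𝕜 := ℝ)
    (f := fun _ (v : EuclideanSpace ℝ (Fin n)) => rexp (-(c * ‖v‖ ^ 2) / 2)) (fun _ => h1)
  refine h2.congr (ae_of_all _ fun φ => ?_)
  simp only [← Real.exp_sum]
  rw [Finset.mul_sum, ← Finset.sum_neg_distrib, Finset.sum_div]

/-- The exponent `-(φ, (B + c)φ)/2` gives a Lebesgue-integrable Gaussian weight. -/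
lemma integrable_form {B : Matrix Λ Λ ℝ} (hB : B.PosSemidef) {c : ℝ} (hc : 0 < c) :
    Integrable (fun φ : Λ → EuclideanSpace ℝ (Fin n) =>
      rexp (-(∑ x, ∑ y, B x y * ⟪φ x, φ y⟫ + c * ∑ x, ‖φ x‖ ^ 2) / 2)) := by
  refine (integrable_gaussian_pi hc).mono' ?_ (ae_of_all _ fun φ => ?_)
  · exact Continuous.aestronglyMeasurable (by fun_prop)
  · rw [Real.norm_eq_abs, Real.abs_exp]
    have := form_nonneg hB φ
    gcongr
    linarith

/-- The Gaussian convolution identity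
`∫ e^{-(φ, Bφ)/2} e^{-c|φ - σ|²/2} dφ = K e^{-(σ, Mσ)/2}`, with `K` positive and independent
of `σ`. -/
lemma gaussian_convolution [DecidableEq Λ] {M B : Matrix Λ Λ ℝ} (hM : M.PosDef)
    {c : ℝ} (hc : 0 < c) (hcM : (c • (1 : Matrix Λ Λ ℝ) - M).PosDef)
    (hB : B = (M⁻¹ - c⁻¹ • (1 : Matrix Λ Λ ℝ))⁻¹) :
    ∃ K : ℝ, 0 < K ∧ ∀ σ : Λ → EuclideanSpace ℝ (Fin n),
      Integrable (fun φ : Λ → EuclideanSpace ℝ (Fin n) =>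
        rexp (-(1 / 2) * (∑ x, ∑ y, B x y * ⟪φ x, φ y⟫)) *
          ∏ x, rexp (-(c * ‖φ x - σ x‖ ^ 2) / 2)) ∧
      ∫ φ : Λ → EuclideanSpace ℝ (Fin n),
        rexp (-(1 / 2) * (∑ x, ∑ y, B x y * ⟪φ x, φ y⟫)) *
          ∏ x, rexp (-(c * ‖φ x - σ x‖ ^ 2) / 2) =
        K * rexp (-(1 / 2) * ∑ x, ∑ y, M x y * ⟪σ x, σ y⟫) := by
  have hint := integrable_form (n := n) (B_posSemidef hM hc hcM hB) hc
  refine ⟨_, integral_exp_pos hint, fun σ => ?_⟩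
  obtain ⟨t, ht⟩ := completed_square hM hc hcM hB σ
  have key : (fun φ : Λ → EuclideanSpace ℝ (Fin n) =>
        rexp (-(1 / 2) * (∑ x, ∑ y, B x y * ⟪φ x, φ y⟫)) *
          ∏ x, rexp (-(c * ‖φ x - σ x‖ ^ 2) / 2)) = fun φ =>
      rexp (-(∑ x, ∑ y, B x y * ⟪(φ - t) x, (φ - t) y⟫ + c * ∑ x, ‖(φ - t) x‖ ^ 2) / 2) *
        rexp (-(1 / 2) * ∑ x, ∑ y, M x y * ⟪σ x, σ y⟫) := by
    funext φ
    rw [← Real.exp_sum, ← Real.exp_add, ← Real.exp_add, ← Finset.sum_div, Finset.sum_neg_distrib,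
      ← Finset.mul_sum]
    congr 1
    linarith [ht φ]
  rw [key]
  refine ⟨(hint.comp_sub_right t).mul_const _, ?_⟩
  rw [integral_mul_const]
  congr 1
  exact integral_sub_right_eq_self (fun φ : Λ → EuclideanSpace ℝ (Fin n) =>
    rexp (-(∑ x, ∑ y, B x y * ⟪φ x, φ y⟫ + c * ∑ x, ‖φ x‖ ^ 2) / 2)) t

end Measures

/-- The renormalisation (disintegration) identity at the heart of the proof of the main
theorem: the spin measure `ν ∝ e^{-(σ,Mσ)/2} ⊗_x μ` is the mixture over the renormalised
field measure `ν_r ∝ e^{-(φ,Bφ)/2 - Σ_x V(φ_x)} dφ` of the tilted product single-spin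
measures `μ_φ = ⊗_x μ_{φ_x}`, where `B = (M⁻¹ - c⁻¹ Id)⁻¹`,
`V(ψ) = -log ∫ e^{-c|ψ-σ|²/2} dμ(σ)` and `μ_ψ` has density `e^{V(ψ)}e^{-c|ψ-σ|²/2}`
with respect to `μ`. -/
theorem renormalisation_identity
    (Λ : Type*) [Fintype Λ] [DecidableEq Λ] [Nonempty Λ]
    (n : ℕ) (hn : 1 ≤ n)
    (μ : MeasureTheory.Measure (EuclideanSpace ℝ (Fin n))) [IsProbabilityMeasure μ]
    (hsupp : μ (Metric.closedBall (0 : EuclideanSpace ℝ (Fin n)) 1)ᶜ = 0)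
    (M : Matrix Λ Λ ℝ) (hMsymm : M.IsSymm) (hMpos : M.PosDef)
    (c : ℝ) (hc : 0 < c) (hcM : (c • (1 : Matrix Λ Λ ℝ) - M).PosDef)
    (B : Matrix Λ Λ ℝ) (hB : B = (M⁻¹ - c⁻¹ • (1 : Matrix Λ Λ ℝ))⁻¹)
    (V : EuclideanSpace ℝ (Fin n) → ℝ)
    (hV : ∀ ψ, V ψ = -Real.log (∫ σ, Real.exp (-(c * ‖ψ - σ‖ ^ 2) / 2) ∂μ))
    (μψ : EuclideanSpace ℝ (Fin n) → MeasureTheory.Measure (EuclideanSpace ℝ (Fin n)))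
    (hμψ : ∀ ψ, μψ ψ = μ.withDensity (fun σ =>
      ENNReal.ofReal (Real.exp (V ψ) * Real.exp (-(c * ‖ψ - σ‖ ^ 2) / 2))))
    (μφ : (Λ → EuclideanSpace ℝ (Fin n)) →
      MeasureTheory.Measure (Λ → EuclideanSpace ℝ (Fin n)))
    (hμφ : ∀ φ, μφ φ = Measure.pi (fun x => μψ (φ x)))
    (ν : MeasureTheory.Measure (Λ → EuclideanSpace ℝ (Fin n)))
    (hν : ν = (Measure.pi (fun _ : Λ => μ)).withDensity (fun σ => ENNReal.ofReal
      (Real.exp (-(1 / 2) * ∑ x, ∑ y, M x y * ⟪σ x, σ y⟫) /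
        ∫ σ', Real.exp (-(1 / 2) * ∑ x, ∑ y, M x y * ⟪σ' x, σ' y⟫)
          ∂(Measure.pi (fun _ : Λ => μ)))))
    (νr : MeasureTheory.Measure (Λ → EuclideanSpace ℝ (Fin n)))
    (hνr : νr = volume.withDensity (fun φ => ENNReal.ofReal
      (Real.exp (-(1 / 2) * (∑ x, ∑ y, B x y * ⟪φ x, φ y⟫) - ∑ x, V (φ x)) /
        ∫ φ' : Λ → EuclideanSpace ℝ (Fin n), Real.exp (-(1 / 2) * (∑ x, ∑ y, B x y * ⟪φ' x, φ' y⟫) - ∑ x, V (φ' x)))))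
    (F : (Λ → EuclideanSpace ℝ (Fin n)) → ℝ)
    (hFmeas : Measurable F) (hFbdd : ∃ C : ℝ, ∀ σ, |F σ| ≤ C) :
    ∫ σ, F σ ∂ν = ∫ φ, (∫ σ, F σ ∂(μφ φ)) ∂νr := by
  obtain ⟨K, hK, hconv⟩ := gaussian_convolution (n := n) hMpos hc hcM hB
  obtain ⟨C, hC⟩ := hFbdd
  set P := Measure.pi (fun _ : Λ => μ) with hP
  set J : EuclideanSpace ℝ (Fin n) → ℝ := fun ψ => ∫ σ, rexp (-(c * ‖ψ - σ‖ ^ 2) / 2) ∂μ with hJ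
  set QM : (Λ → EuclideanSpace ℝ (Fin n)) → ℝ := fun σ =>
    rexp (-(1 / 2) * ∑ x, ∑ y, M x y * ⟪σ x, σ y⟫) with hQM
  set QB : (Λ → EuclideanSpace ℝ (Fin n)) → ℝ := fun φ =>
    rexp (-(1 / 2) * ∑ x, ∑ y, B x y * ⟪φ x, φ y⟫) with hQB
  set T : (Λ → EuclideanSpace ℝ (Fin n)) → (Λ → EuclideanSpace ℝ (Fin n)) → ℝ := fun φ σ =>
    ∏ x, rexp (-(c * ‖φ x - σ x‖ ^ 2) / 2) with hT
  have hker (ψ : EuclideanSpace ℝ (Fin n)) :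
      Integrable (fun σ => rexp (-(c * ‖ψ - σ‖ ^ 2) / 2)) μ := by
    refine (integrable_const (1 : ℝ)).mono'
      (Continuous.aestronglyMeasurable (by fun_prop)) (ae_of_all _ fun σ => ?_)
    rw [Real.norm_eq_abs, Real.abs_exp, Real.exp_le_one_iff]
    have : 0 ≤ c * ‖ψ - σ‖ ^ 2 := by positivity
    linarith
  have hJpos (ψ) : 0 < J ψ := integral_exp_pos (hker ψ)
  have hJmeas : Measurable J := by
    refine (StronglyMeasurable.integral_prod_right (ν := μ)
      (f := fun ψ σ => rexp (-(c * ‖ψ - σ‖ ^ 2) / 2)) ?_).measurable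
    exact Continuous.stronglyMeasurable (by fun_prop)
  have hexpV (ψ) : rexp (V ψ) = (J ψ)⁻¹ := by rw [hV, Real.exp_neg, Real.exp_log (hJpos ψ)]
  have hdens (φ : Λ → EuclideanSpace ℝ (Fin n)) :
      rexp (-(1 / 2) * (∑ x, ∑ y, B x y * ⟪φ x, φ y⟫) - ∑ x, V (φ x)) = QB φ * ∏ x, J (φ x) := by
    rw [Real.exp_sub, Real.exp_sum, div_eq_mul_inv, ← Finset.prod_inv_distrib]
    simp [hexpV, hQB]
  -- The inner expectation, with its normalisation made explicit.
  have hinner (φ : Λ → EuclideanSpace ℝ (Fin n)) :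
      ∫ σ, F σ ∂(μφ φ) = (∏ x, J (φ x))⁻¹ * ∫ σ, F σ * T φ σ ∂P := by
    have hg0 (x : Λ) (s : EuclideanSpace ℝ (Fin n)) :
      0 ≤ rexp (V (φ x)) * rexp (-(c * ‖φ x - s‖ ^ 2) / 2) := by positivity
    rw [hμφ]
    simp only [hμψ]
    rw [pi_withDensity_ofReal μ (fun x s => rexp (V (φ x)) * rexp (-(c * ‖φ x - s‖ ^ 2) / 2)) hg0
      (fun x => (hker (φ x)).const_mul _),
      integral_withDensity_eq_integral_toReal_smul (by fun_prop) (by simp), ← integral_const_mul]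
    refine integral_congr_ae (ae_of_all _ fun σ => ?_)
    simp only [smul_eq_mul]
    rw [ENNReal.toReal_ofReal (Finset.prod_nonneg fun x _ => hg0 x _), Finset.prod_mul_distrib]
    simp only [hexpV, Finset.prod_inv_distrib, hT]
    ring
  have hQMint : Integrable QM P := by
    refine (integrable_const (1 : ℝ)).mono'
      (Continuous.aestronglyMeasurable (by fun_prop)) (ae_of_all _ fun σ => ?_)
    rw [Real.norm_eq_abs, Real.abs_exp, Real.exp_le_one_iff]
    have := form_nonneg hMpos.posSemidef σ
    linarith
  -- Fubini's theorem for the joint weight, tested against a bounded function of `σ`.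
  have hfub (f : (Λ → EuclideanSpace ℝ (Fin n)) → ℝ) (hf : Measurable f) (C : ℝ)
      (hfC : ∀ σ, |f σ| ≤ C) :
      ∫ φ, QB φ * ∫ σ, f σ * T φ σ ∂P = K * ∫ σ, f σ * QM σ ∂P := by
    have hint : Integrable (Function.uncurry fun φ σ => f σ * (QB φ * T φ σ))
        ((volume : Measure (Λ → EuclideanSpace ℝ (Fin n))).prod P) := by
      have hmeas : Measurable (Function.uncurry fun φ σ => f σ * (QB φ * T φ σ)) := by
        refine (hf.comp measurable_snd).mul (Continuous.measurable ?_)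
        simp only [hQB, hT]
        fun_prop
      rw [integrable_prod_iff' hmeas.aestronglyMeasurable]
      refine ⟨ae_of_all _ fun σ => (hconv σ).1.const_mul (f σ), ?_⟩
      have hnorm (σ) : ∫ φ, ‖Function.uncurry (fun φ σ => f σ * (QB φ * T φ σ)) (φ, σ)‖
          = |f σ| * (K * QM σ) := by
        rw [← (hconv σ).2, ← integral_const_mul]
        refine integral_congr_ae (ae_of_all _ fun φ => ?_)
        simp only [Function.uncurry, norm_mul, Real.norm_eq_abs]
        rw [abs_of_pos (show 0 < QB φ from Real.exp_pos _),
          abs_of_pos (show 0 < T φ σ from Finset.prod_pos fun x _ => Real.exp_pos _)]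
      simp only [hnorm]
      exact (hQMint.const_mul K).bdd_mul (c := C) hf.abs.aestronglyMeasurable
        (ae_of_all _ fun σ => by simpa using hfC σ)
    calc ∫ φ, QB φ * ∫ σ, f σ * T φ σ ∂P
        = ∫ φ, ∫ σ, f σ * (QB φ * T φ σ) ∂P := by
          refine integral_congr_ae (ae_of_all _ fun φ => ?_)
          simp only [← integral_const_mul]
          refine integral_congr_ae (ae_of_all _ fun σ => ?_)
          ring
      _ = ∫ σ, (∫ φ, f σ * (QB φ * T φ σ)) ∂P := integral_integral_swap hint
      _ = K * ∫ σ, f σ * QM σ ∂P := by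
          rw [← integral_const_mul]
          refine integral_congr_ae (ae_of_all _ fun σ => ?_)
          simp only [integral_const_mul]
          rw [(hconv σ).2]
          ring
  have hTint (φ : Λ → EuclideanSpace ℝ (Fin n)) : ∫ σ, T φ σ ∂P = ∏ x, J (φ x) :=
    integral_fintype_prod_eq_prod (fun x s => rexp (-(c * ‖φ x - s‖ ^ 2) / 2))
  have hZ : ∫ φ, QB φ * ∏ x, J (φ x) = K * ∫ σ, QM σ ∂P := by
    have := hfub (fun _ => 1) measurable_const 1 (by simp)
    simpa [hTint] using this
  have hQB0 (φ) : 0 < QB φ := Real.exp_pos _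
  have hJ0 (φ : Λ → EuclideanSpace ℝ (Fin n)) : 0 < ∏ x, J (φ x) :=
    Finset.prod_pos fun x _ => hJpos _
  have hQBmeas : Measurable QB := Continuous.measurable (by fun_prop)
  have hQMmeas : Measurable QM := Continuous.measurable (by fun_prop)
  have hZM0 : 0 ≤ ∫ σ, QM σ ∂P := integral_nonneg fun σ => (Real.exp_pos _).le
  simp only [hdens] at hνr
  rw [hZ] at hνr
  replace hν : ν = P.withDensity fun σ => ENNReal.ofReal (QM σ / ∫ σ, QM σ ∂P) := hν
  rw [hνr, hν, integral_withDensity_eq_integral_toReal_smul (by fun_prop) (by simp),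
    integral_withDensity_eq_integral_toReal_smul (by fun_prop) (by simp)]
  have hl (σ) : (ENNReal.ofReal (QM σ / ∫ σ, QM σ ∂P)).toReal • F σ
      = (∫ σ, QM σ ∂P)⁻¹ * (F σ * QM σ) := by
    rw [ENNReal.toReal_ofReal (div_nonneg (Real.exp_pos _).le hZM0), smul_eq_mul]
    ring
  have hr (φ) : (ENNReal.ofReal ((QB φ * ∏ x, J (φ x)) / (K * ∫ σ, QM σ ∂P))).toReal •
      ∫ σ, F σ ∂(μφ φ) = (K * ∫ σ, QM σ ∂P)⁻¹ * (QB φ * ∫ σ, F σ * T φ σ ∂P) := by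
    rw [ENNReal.toReal_ofReal (by have := hQB0 φ; have := hJ0 φ; positivity), smul_eq_mul, hinner]
    have := (hJ0 φ).ne'
    field_simp
  simp only [hl, hr, integral_const_mul]
  rw [hfub F hFmeas C hC, mul_inv]
  field_simp
end
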